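/- arXiv:1603.08176 — 2 statements merged into one kernel-verified Lean document; each statement's English description precedes it below -/
import Mathlib

section
/- Lower bounds for the relative total energy (Lemma on I, part (i)): Assume (F̄, v̄, θ̄) ∈ Γ_{M,δ}, that ψ(F,θ) ∈ C³(ℝ^{d×d} × [0,∞)) and η(F,θ), Σ(F,θ) ∈ C²(ℝ^{d×d} × [0,∞)) satisfy the constitutive relations Σ = ∂ψ/∂F, η = −∂ψ/∂θ, e = ψ + θη, and the Gibbs conditions ψ_FF > 0 and η_θ > 0. Under the growth hypotheses (a1), (a2), (a3), there exist R = R(δ,M), K₁ = K₁(δ,M,c) and K₂ = K₂(δ,M,c) such that I(F,v,θ|F̄,v̄,θ̄) ≥ (1/2)K₁(|F|^p + θ^q + |v|²) whenever |F|^p + θ^q + |v|² > R, and I(F,v,θ|F̄,v̄,θ̄) ≥ K₂(|F − F̄|² + |θ − θ̄|² + |v − v̄|²) whenever |F|^p + θ^q + |v|² ≤ R, for all (F̄, v̄, θ̄) ∈ Γ_{M,δ}. -/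
/-!
Two algebraic forms of the relative total energy carry the argument. Since the terms in `η(F̄,θ̄)`
cancel, `I = e(F,θ) - θ̄ η(F,θ) - ψ(F̄,θ̄) - Σ(F̄,θ̄):(F - F̄) + ½|v - v̄|²`; here `e` dominates the
sublinear entropy term and the linear stress term, so `I` grows like `|F|^p + θ^q + |v|²`. Inserting
the intermediate state `(F,θ̄)` instead,
`I = [ψ(F,θ̄) - ψ(F̄,θ̄) - Σ(F̄,θ̄):(F - F̄)] + [ψ(F,θ) - ψ(F,θ̄) + η(F,θ)(θ - θ̄)] + ½|v - v̄|²`,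
where the brackets are the Taylor remainders of `ψ(·,θ̄)` at `F̄` and of `-ψ(F,·)` at `θ`. On a
compact set the Gibbs conditions bound both second derivatives uniformly away from zero.
-/

open scoped RealInnerProductSpace Topology
open MeasureTheory

noncomputable section

section PartialDerivatives

variable {𝕜 E F G : Type*} [NontriviallyNormedField 𝕜] [NormedAddCommGroup E] [NormedSpace 𝕜 E]
  [NormedAddCommGroup F] [NormedSpace 𝕜 F] [NormedAddCommGroup G] [NormedSpace 𝕜 G]

lemma contDiffOn_fderiv_fst {f : E → F → G} {t : Set F} {m n : WithTop ℕ∞}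
    (hf : ContDiffOn 𝕜 n (fun z : E × F => f z.1 z.2) (Set.univ ×ˢ t)) (hmn : m + 1 ≤ n) :
    ContDiffOn 𝕜 m (fun z : E × F => fderiv 𝕜 (fun x => f x z.2) z.1) (Set.univ ×ˢ t) := by
  intro z hz
  simp only [← fderivWithin_univ]
  exact ContDiffWithinAt.fderivWithin (f := fun (w : E × F) x => f x w.2)
    (hf.comp (f := fun w : (E × F) × E => (w.2, w.1.2)) (by fun_prop)
      (fun _ hw => ⟨trivial, hw.1.2⟩) (z, z.1) ⟨hz, trivial⟩)
    contDiffWithinAt_fst uniqueDiffOn_univ hmn hz fun _ _ => trivial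

lemma continuousOn_derivWithin_snd {f : E → 𝕜 → G} {s : Set E} {t : Set 𝕜}
    (hf : ContDiffOn 𝕜 1 (fun z : E × 𝕜 => f z.1 z.2) (s ×ˢ t)) (ht : UniqueDiffOn 𝕜 t) :
    ContinuousOn (fun z : E × 𝕜 => derivWithin (f z.1) t z.2) (s ×ˢ t) := by
  intro z hz
  have hpartial : ContDiffWithinAt 𝕜 0 (fun w : E × 𝕜 => fderivWithin 𝕜 (f w.1) t w.2)
      (s ×ˢ t) z :=
    ContDiffWithinAt.fderivWithin (f := fun (w : E × 𝕜) y => f w.1 y)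
      (hf.comp (f := fun w : (E × 𝕜) × 𝕜 => (w.1.1, w.2)) (by fun_prop)
        (fun _ hw => ⟨hw.1.1, hw.2⟩) (z, z.2) ⟨hz, hz.2⟩)
      contDiffWithinAt_snd ht (by norm_num) hz fun _ hw => hw.2
  exact hpartial.continuousWithinAt.clm_apply continuousWithinAt_const

end PartialDerivatives

section QuadraticLowerBounds

lemma half_mul_sq_le_of_le_second_deriv {D : Set ℝ} (hD : Convex ℝ D) {f f' f'' : ℝ → ℝ} {m : ℝ}
    (hf : ContinuousOn f D) (hff' : ∀ t ∈ interior D, HasDerivAt f (f' t) t)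
    (hf' : ContinuousOn f' D) (hf'f'' : ∀ t ∈ interior D, HasDerivAt f' (f'' t) t)
    (hm : ∀ t ∈ interior D, m ≤ f'' t) {x y : ℝ} (hx : x ∈ D) (hy : y ∈ D) :
    m / 2 * (y - x) ^ 2 ≤ f y - f x - f' x * (y - x) := by
  have hslope : ∀ s ∈ D, ∀ t ∈ D, s ≤ t → m * (t - s) ≤ f' t - f' s :=
    hD.mul_sub_le_image_sub_of_le_deriv hf'
      (fun t ht => (hf'f'' t ht).differentiableAt.differentiableWithinAt)
      fun t ht => (hf'f'' t ht).deriv ▸ hm t ht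
  set φ : ℝ → ℝ := fun t => f t - f' x * t - m / 2 * (t - x) ^ 2 with hφ
  have hφ_cont : ContinuousOn φ D := by fun_prop
  have hφ_deriv : ∀ t ∈ interior D, HasDerivAt φ (f' t - f' x - m * (t - x)) t := by
    intro t ht
    refine (((hff' t ht).fun_sub ((hasDerivAt_id' t).const_mul (f' x))).fun_sub
      ((((hasDerivAt_id' t).sub_const x).fun_pow 2).const_mul (m / 2))).congr_deriv ?_
    ring
  have hφ_min : φ x ≤ φ y := by
    rcases le_total x y with hxy | hyx
    · have hsub : Set.Icc x y ⊆ D := hD.ordConnected.out hx hy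
      refine monotoneOn_of_deriv_nonneg (convex_Icc x y) (hφ_cont.mono hsub)
        (fun t ht => (hφ_deriv t (interior_mono hsub ht)).differentiableAt.differentiableWithinAt)
        (fun t ht => ?_) ⟨le_rfl, hxy⟩ ⟨hxy, le_rfl⟩ hxy
      have ht' := interior_subset ht
      rw [(hφ_deriv t (interior_mono hsub ht)).deriv]
      linarith [hslope x hx t (hsub ht') ht'.1]
    · have hsub : Set.Icc y x ⊆ D := hD.ordConnected.out hy hx
      refine antitoneOn_of_deriv_nonpos (convex_Icc y x) (hφ_cont.mono hsub)
        (fun t ht => (hφ_deriv t (interior_mono hsub ht)).differentiableAt.differentiableWithinAt)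
        (fun t ht => ?_) ⟨le_rfl, hyx⟩ ⟨hyx, le_rfl⟩ hyx
      have ht' := interior_subset ht
      rw [(hφ_deriv t (interior_mono hsub ht)).deriv]
      linarith [hslope t (hsub ht') x hx ht'.2]
  simp only [hφ, sub_self] at hφ_min
  linarith

variable {E : Type*} [NormedAddCommGroup E] [NormedSpace ℝ E]

lemma half_mul_norm_sq_le_of_le_second_fderiv {s : Set E} (hs : Convex ℝ s) {f : E → ℝ}
    {f' : E → E →L[ℝ] ℝ} {f'' : E → E →L[ℝ] E →L[ℝ] ℝ} {k : ℝ}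
    (hf : ∀ x ∈ s, HasFDerivAt f (f' x) x) (hf' : ∀ x ∈ s, HasFDerivAt f' (f'' x) x)
    (hk : ∀ x ∈ s, ∀ v, k * ‖v‖ ^ 2 ≤ f'' x v v) {x y : E} (hx : x ∈ s) (hy : y ∈ s) :
    k / 2 * ‖y - x‖ ^ 2 ≤ f y - f x - f' x (y - x) := by
  set γ : ℝ →ᵃ[ℝ] E := AffineMap.lineMap x y
  have hγ_mem : ∀ t ∈ Set.Icc (0 : ℝ) 1, γ t ∈ s := fun t ht => hs.lineMap_mem hx hy ht
  have hγ : ∀ t, HasDerivAt γ (y - x) t := fun _ => AffineMap.hasDerivAt_lineMap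
  have hfγ : ∀ t ∈ Set.Icc (0 : ℝ) 1, HasDerivAt (fun t => f (γ t)) (f' (γ t) (y - x)) t :=
    fun t ht => (hf _ (hγ_mem t ht)).comp_hasDerivAt t (hγ t)
  have hf'γ : ∀ t ∈ Set.Icc (0 : ℝ) 1,
      HasDerivAt (fun t => f' (γ t) (y - x)) (f'' (γ t) (y - x) (y - x)) t := fun t ht => by
    simpa using ((hf' _ (hγ_mem t ht)).comp_hasDerivAt t (hγ t)).clm_apply
      (hasDerivAt_const t (y - x))
  have hline := half_mul_sq_le_of_le_second_deriv (convex_Icc (0 : ℝ) 1)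
    (fun t ht => (hfγ t ht).continuousAt.continuousWithinAt)
    (fun t ht => hfγ t (interior_subset ht))
    (fun t ht => (hf'γ t ht).continuousAt.continuousWithinAt)
    (fun t ht => hf'γ t (interior_subset ht))
    (fun t ht => hk _ (hγ_mem t (interior_subset ht)) (y - x))
    (Set.left_mem_Icc.2 zero_le_one) (Set.right_mem_Icc.2 zero_le_one)
  simp only [γ, AffineMap.lineMap_apply_zero, AffineMap.lineMap_apply_one] at hline
  linarith

lemma exists_pos_mul_norm_sq_le_of_isCompact [FiniteDimensional ℝ E] {X : Type*}
    [TopologicalSpace X] {K : Set X} (hK : IsCompact K) {B : X → E →L[ℝ] E →L[ℝ] ℝ}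
    (hB : ContinuousOn B K) (hpos : ∀ x ∈ K, ∀ v ≠ 0, 0 < B x v v) :
    ∃ k > (0 : ℝ), ∀ x ∈ K, ∀ v, k * ‖v‖ ^ 2 ≤ B x v v := by
  have : ProperSpace E := FiniteDimensional.proper_real E
  have hcont : ContinuousOn (fun w : X × E => B w.1 w.2 w.2) (K ×ˢ Metric.sphere 0 1) :=
    ((hB.comp continuousOn_fst fun w hw => hw.1).clm_apply continuousOn_snd).clm_apply
      continuousOn_snd
  obtain ⟨k, hk, hmin⟩ := (hK.prod (isCompact_sphere (0 : E) 1)).exists_forall_le' hcont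
    fun w hw => hpos w.1 hw.1 w.2 (ne_zero_of_mem_unit_sphere ⟨w.2, hw.2⟩)
  refine ⟨k, hk, fun x hx v => ?_⟩
  rcases eq_or_ne v 0 with rfl | hv
  · simp
  have hunit : k ≤ B x (‖v‖⁻¹ • v) (‖v‖⁻¹ • v) :=
    hmin (x, ‖v‖⁻¹ • v) ⟨hx, by simp [norm_smul, hv]⟩
  simp only [map_smul, smul_apply, smul_eq_mul] at hunit
  calc k * ‖v‖ ^ 2 ≤ ‖v‖⁻¹ * (‖v‖⁻¹ * B x v v) * ‖v‖ ^ 2 := by gcongr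
    _ = B x v v := by field_simp

end QuadraticLowerBounds

section Growth

lemma exists_le_mul_rpow_add {p ε : ℝ} (hp : 1 < p) (hε : 0 < ε) :
    ∃ C : ℝ, ∀ x : ℝ, 0 ≤ x → x ≤ ε * x ^ p + C := by
  set r := ε ^ p⁻¹
  have hr : 0 < r := Real.rpow_pos_of_pos hε _
  refine ⟨r⁻¹ ^ p.conjExponent / p.conjExponent, fun x hx => ?_⟩
  have hxr : (x * r) ^ p = ε * x ^ p := by
    rw [Real.mul_rpow hx hr.le, Real.rpow_inv_rpow hε.le (by linarith), mul_comm]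
  calc x = x * r * r⁻¹ := by field_simp
    _ ≤ (x * r) ^ p / p + r⁻¹ ^ p.conjExponent / p.conjExponent :=
      Real.young_inequality_of_nonneg (by positivity) (by positivity) (.conjExponent hp)
    _ ≤ ε * x ^ p + r⁻¹ ^ p.conjExponent / p.conjExponent := by
      rw [hxr]
      gcongr
      exact div_le_self (by positivity) hp.le

lemma quarter_mul_norm_sq_sub_le {W : Type*} [SeminormedAddCommGroup W] (v w : W) :
    1 / 4 * ‖v‖ ^ 2 - 1 / 2 * ‖w‖ ^ 2 ≤ 1 / 2 * ‖v - w‖ ^ 2 := by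
  have htri : ‖v‖ ^ 2 ≤ 2 * (‖v - w‖ ^ 2 + ‖w‖ ^ 2) :=
    (pow_le_pow_left₀ (norm_nonneg v) (norm_le_norm_sub_add v w) 2).trans add_sq_le
  linarith

lemma exists_clm_apply_sub_le_mul_rpow_add {E : Type*} [SeminormedAddCommGroup E]
    [NormedSpace ℝ E] {p ε : ℝ} (hp : 1 < p) (hε : 0 < ε) (L M : ℝ) :
    ∃ C : ℝ, ∀ ℓ : E →L[ℝ] ℝ, ‖ℓ‖ ≤ L → ∀ x₀ : E, ‖x₀‖ ≤ M → ∀ x : E,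
      ℓ (x - x₀) ≤ ε * ‖x‖ ^ p + C := by
  obtain ⟨C, hC⟩ := exists_le_mul_rpow_add hp (show 0 < ε / (|L| + 1) by positivity)
  refine ⟨(|L| + 1) * (C + M), fun ℓ hℓ x₀ hx₀ x => ?_⟩
  calc ℓ (x - x₀) ≤ ‖ℓ‖ * ‖x - x₀‖ := (le_abs_self _).trans (ℓ.le_opNorm _)
    _ ≤ (|L| + 1) * (‖x‖ + M) := by
      gcongr
      · linarith [le_abs_self L]
      · exact (norm_sub_le _ _).trans (by gcongr)
    _ ≤ (|L| + 1) * (ε / (|L| + 1) * ‖x‖ ^ p + C + M) := by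
      gcongr
      exact hC _ (norm_nonneg x)
    _ = ε * ‖x‖ ^ p + (|L| + 1) * (C + M) := by field_simp; ring

end Growth

section StateCylinder

variable {E : Type*} [NormedAddCommGroup E]

/-- The bounded thermoelastic states: pairs `(F, θ)` with `|F| ≤ A` and `0 ≤ θ ≤ A`. The same `A`
bounds both components, so these sets exhaust the state space `E × [0, ∞)` as `A → ∞`. -/
def stateCylinder (E : Type*) [NormedAddCommGroup E] (A : ℝ) : Set (E × ℝ) :=
  Metric.closedBall 0 A ×ˢ Set.Icc 0 A

lemma mem_stateCylinder {A : ℝ} {F : E} {θ : ℝ} :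
    (F, θ) ∈ stateCylinder E A ↔ ‖F‖ ≤ A ∧ 0 ≤ θ ∧ θ ≤ A := by
  simp [stateCylinder]

lemma stateCylinder_subset (A : ℝ) : stateCylinder E A ⊆ Set.univ ×ˢ Set.Ici 0 :=
  fun _ hz => ⟨trivial, hz.2.1⟩

lemma isCompact_stateCylinder [ProperSpace E] (A : ℝ) : IsCompact (stateCylinder E A) :=
  (isCompact_closedBall 0 A).prod isCompact_Icc

lemma exists_stateCylinder_of_rpow_add_rpow_le {p q : ℝ} (hp : 0 < p) (hq : 0 < q) (M R : ℝ) :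
    ∃ A, M ≤ A ∧ ∀ (F : E) (θ : ℝ), 0 ≤ θ → ‖F‖ ^ p + θ ^ q ≤ R → (F, θ) ∈ stateCylinder E A := by
  refine ⟨max M (max (R ^ p⁻¹) (R ^ q⁻¹)), le_max_left _ _, fun F θ hθ hR => ?_⟩
  have hFp : 0 ≤ ‖F‖ ^ p := by positivity
  have hθq : 0 ≤ θ ^ q := by positivity
  have hF : ‖F‖ ≤ R ^ p⁻¹ :=
    (Real.le_rpow_inv_iff_of_pos (norm_nonneg F) (by linarith) hp).2 (by linarith)
  have hθR : θ ≤ R ^ q⁻¹ := (Real.le_rpow_inv_iff_of_pos hθ (by linarith) hq).2 (by linarith)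
  exact mem_stateCylinder.2 ⟨by simp [hF], hθ, by simp [hθR]⟩

variable [ProperSpace E] {G : Type*} [SeminormedAddCommGroup G]

lemma exists_norm_le_on_stateCylinder {f : E → ℝ → G}
    (hf : ContinuousOn (fun z : E × ℝ => f z.1 z.2) (Set.univ ×ˢ Set.Ici 0)) (A : ℝ) :
    ∃ C, ∀ F θ, (F, θ) ∈ stateCylinder E A → ‖f F θ‖ ≤ C := by
  obtain ⟨C, hC⟩ := (isCompact_stateCylinder A).exists_bound_of_continuousOn
    (hf.mono (stateCylinder_subset A))
  exact ⟨C, fun F θ => hC (F, θ)⟩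

lemma exists_norm_le_mul_rpow_add_rpow_add {p q ε : ℝ} (hp : 0 < p) (hq : 0 < q) (hε : 0 < ε)
    {f : E → ℝ → G} (hf : ContinuousOn (fun z : E × ℝ => f z.1 z.2) (Set.univ ×ˢ Set.Ici 0))
    (hfar : ∃ R₀, ∀ F θ, 0 ≤ θ → R₀ ≤ ‖F‖ ^ p + θ ^ q → ‖f F θ‖ ≤ ε * (‖F‖ ^ p + θ ^ q)) :
    ∃ C, ∀ F θ, 0 ≤ θ → ‖f F θ‖ ≤ ε * (‖F‖ ^ p + θ ^ q) + C := by
  obtain ⟨R₀, hR₀⟩ := hfar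
  obtain ⟨A, -, hA⟩ := exists_stateCylinder_of_rpow_add_rpow_le (E := E) hp hq 0 R₀
  obtain ⟨C, hC⟩ := exists_norm_le_on_stateCylinder hf A
  refine ⟨max C 0, fun F θ hθ => ?_⟩
  rcases le_total R₀ (‖F‖ ^ p + θ ^ q) with hlarge | hsmall
  · exact le_add_of_le_of_nonneg (hR₀ F θ hθ hlarge) (le_max_right _ _)
  · exact le_add_of_nonneg_of_le (by positivity)
      ((hC F θ (hA F θ hθ hsmall)).trans (le_max_left _ _))

end StateCylinder

section RelativeEnergy

variable {E W : Type*} [NormedAddCommGroup E] [NormedSpace ℝ E] [SeminormedAddCommGroup W]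

/-- The relative free energy `ψ(F,θ|F̄,θ̄)`: the free energy minus its first-order Taylor polynomial
at the reference state, written with the entropy `η = -∂ψ/∂θ`. The stress `Sig = ∂ψ/∂F` is
dual-valued, so that no inner product on the space of deformation gradients is needed. -/
def relativeFreeEnergy (ψ η : E → ℝ → ℝ) (Sig : E → ℝ → E →L[ℝ] ℝ) (F : E) (θ : ℝ)
    (Fb : E) (θb : ℝ) : ℝ :=
  ψ F θ - ψ Fb θb - Sig Fb θb (F - Fb) + η Fb θb * (θ - θb)

/-- The relative total energy `I(F,v,θ|F̄,v̄,θ̄)`, measuring how far the state `(F,v,θ)` is from the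
reference state `(F̄,v̄,θ̄)`. -/
def relativeTotalEnergy (ψ η : E → ℝ → ℝ) (Sig : E → ℝ → E →L[ℝ] ℝ) (F : E) (v : W) (θ : ℝ)
    (Fb : E) (vb : W) (θb : ℝ) : ℝ :=
  relativeFreeEnergy ψ η Sig F θ Fb θb + (η F θ - η Fb θb) * (θ - θb) + (1 / 2) * ‖v - vb‖ ^ 2

variable {ψ η : E → ℝ → ℝ} {Sig : E → ℝ → E →L[ℝ] ℝ}

lemma relativeTotalEnergy_eq_internalEnergy_sub (F : E) (v : W) (θ : ℝ) (Fb : E) (vb : W)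
    (θb : ℝ) :
    relativeTotalEnergy ψ η Sig F v θ Fb vb θb =
      (ψ F θ + θ * η F θ) - θb * η F θ - ψ Fb θb - Sig Fb θb (F - Fb)
        + 1 / 2 * ‖v - vb‖ ^ 2 := by
  rw [relativeTotalEnergy, relativeFreeEnergy]
  ring

lemma relativeTotalEnergy_eq_add (F : E) (v : W) (θ : ℝ) (Fb : E) (vb : W) (θb : ℝ) :
    relativeTotalEnergy ψ η Sig F v θ Fb vb θb =
      (ψ F θb - ψ Fb θb - Sig Fb θb (F - Fb)) + (ψ F θ - ψ F θb + η F θ * (θ - θb))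
        + 1 / 2 * ‖v - vb‖ ^ 2 := by
  rw [relativeTotalEnergy, relativeFreeEnergy]
  ring

variable [FiniteDimensional ℝ E]

lemma exists_mul_growth_sub_le_relativeTotalEnergy {p q : ℝ} (hp : 1 < p) (hq : 0 < q)
    (hψ : ContinuousOn (fun z : E × ℝ => ψ z.1 z.2) (Set.univ ×ˢ Set.Ici 0))
    (hη : ContinuousOn (fun z : E × ℝ => η z.1 z.2) (Set.univ ×ˢ Set.Ici 0))
    (hSig : ContinuousOn (fun z : E × ℝ => Sig z.1 z.2) (Set.univ ×ˢ Set.Ici 0))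
    {c : ℝ} (hc : 0 < c)
    (henergy : ∀ F θ, 0 ≤ θ → c * (‖F‖ ^ p + θ ^ q) - c ≤ ψ F θ + θ * η F θ)
    (hentropy : ∀ ε > (0 : ℝ), ∃ R₀, ∀ F θ, 0 ≤ θ → R₀ ≤ ‖F‖ ^ p + θ ^ q →
      |η F θ| ≤ ε * (‖F‖ ^ p + θ ^ q))
    {M : ℝ} (hM : 0 < M) :
    ∃ K > (0 : ℝ), ∃ C, ∀ (Fb : E) (vb : W) (θb : ℝ),
      ‖Fb‖ ≤ M → ‖vb‖ ≤ M → 0 ≤ θb → θb ≤ M → ∀ (F : E) (v : W) (θ : ℝ), 0 ≤ θ →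
        K * (‖F‖ ^ p + θ ^ q + ‖v‖ ^ 2) - C ≤ relativeTotalEnergy ψ η Sig F v θ Fb vb θb := by
  have : ProperSpace E := FiniteDimensional.proper_real E
  obtain ⟨Cη, hCη⟩ := exists_norm_le_mul_rpow_add_rpow_add (zero_lt_one.trans hp) hq
    (show 0 < c / (4 * M) by positivity) hη (hentropy _ (by positivity))
  obtain ⟨Cψ, hCψ⟩ := exists_norm_le_on_stateCylinder hψ M
  obtain ⟨L, hL⟩ := exists_norm_le_on_stateCylinder hSig M
  obtain ⟨CS, hCS⟩ := exists_clm_apply_sub_le_mul_rpow_add (E := E) hp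
    (show 0 < c / 4 by positivity) L M
  refine ⟨min (c / 2) (1 / 4), by positivity, c + M * Cη + Cψ + CS + M ^ 2 / 2, ?_⟩
  intro Fb vb θb hFb hvb hθb hθbM F v θ hθ
  have hbar : (Fb, θb) ∈ stateCylinder E M := mem_stateCylinder.2 ⟨hFb, hθb, hθbM⟩
  have hηterm : θb * η F θ ≤ c / 4 * (‖F‖ ^ p + θ ^ q) + M * Cη :=
    calc θb * η F θ ≤ θb * ‖η F θ‖ := by gcongr; exact le_abs_self _
      _ ≤ M * (c / (4 * M) * (‖F‖ ^ p + θ ^ q) + Cη) := by gcongr; exact hCη F θ hθ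
      _ = c / 4 * (‖F‖ ^ p + θ ^ q) + M * Cη := by field_simp
  have hψterm : ψ Fb θb ≤ Cψ := (le_abs_self _).trans (hCψ Fb θb hbar)
  have hSigterm : Sig Fb θb (F - Fb) ≤ c / 4 * ‖F‖ ^ p + CS := hCS _ (hL Fb θb hbar) Fb hFb F
  have hvterm : 1 / 4 * ‖v‖ ^ 2 - M ^ 2 / 2 ≤ 1 / 2 * ‖v - vb‖ ^ 2 := by
    have : ‖vb‖ ^ 2 ≤ M ^ 2 := by gcongr
    linarith [quarter_mul_norm_sq_sub_le v vb]
  have hK : min (c / 2) (1 / 4) * (‖F‖ ^ p + θ ^ q + ‖v‖ ^ 2) ≤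
      c / 2 * (‖F‖ ^ p + θ ^ q) + 1 / 4 * ‖v‖ ^ 2 := by
    rw [mul_add]
    gcongr
    exacts [min_le_left _ _, min_le_right _ _]
  have hθq : 0 ≤ c * θ ^ q := by positivity
  rw [relativeTotalEnergy_eq_internalEnergy_sub]
  linarith [henergy F θ hθ]

lemma exists_half_mul_norm_sq_le_of_hessian_pos
    (hψ : ContDiffOn ℝ 2 (fun z : E × ℝ => ψ z.1 z.2) (Set.univ ×ˢ Set.Ici 0))
    (hψFF : ∀ F θ, 0 ≤ θ → ∀ V : E, V ≠ 0 →
      0 < iteratedFDeriv ℝ 2 (fun F' => ψ F' θ) F ![V, V]) (A : ℝ) :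
    ∃ k > (0 : ℝ), ∀ F Fb θ, (F, θ) ∈ stateCylinder E A → (Fb, θ) ∈ stateCylinder E A →
      k / 2 * ‖F - Fb‖ ^ 2 ≤
        ψ F θ - ψ Fb θ - fderiv ℝ (fun F' => ψ F' θ) Fb (F - Fb) := by
  have : ProperSpace E := FiniteDimensional.proper_real E
  have hψF : ContDiffOn ℝ 1 (fun z : E × ℝ => fderiv ℝ (fun F => ψ F z.2) z.1)
      (Set.univ ×ˢ Set.Ici 0) := contDiffOn_fderiv_fst hψ (by norm_num)
  have hψFF_cont : ContDiffOn ℝ 0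
      (fun z : E × ℝ => fderiv ℝ (fderiv ℝ (fun F => ψ F z.2)) z.1)
      (Set.univ ×ˢ Set.Ici 0) :=
    contDiffOn_fderiv_fst (f := fun F θ => fderiv ℝ (fun F' => ψ F' θ) F) hψF (by norm_num)
  obtain ⟨k, hk, hcoercive⟩ := exists_pos_mul_norm_sq_le_of_isCompact (isCompact_stateCylinder A)
    (hψFF_cont.continuousOn.mono (stateCylinder_subset A)) fun z hz V hV => by
      simpa [iteratedFDeriv_two_apply] using hψFF z.1 z.2 hz.2.1 V hV
  refine ⟨k, hk, fun F Fb θ hF hFb => ?_⟩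
  have hslice : ContDiff ℝ 2 (fun F' => ψ F' θ) :=
    contDiffOn_univ.1 (hψ.comp (f := fun F' => (F', θ)) (by fun_prop) fun _ _ => ⟨trivial, hF.2.1⟩)
  exact half_mul_norm_sq_le_of_le_second_fderiv (convex_closedBall 0 A)
    (fun F' _ => (hslice.differentiable (by norm_num) F').hasFDerivAt)
    (fun F' _ => ((hslice.fderiv_right (m := 1) (by norm_num)).differentiable
      (by norm_num) F').hasFDerivAt)
    (fun F' hF' => hcoercive (F', θ) ⟨hF', hF.2⟩) hFb.1 hF.1

lemma exists_half_mul_sq_le_of_derivWithin_entropy_pos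
    (hψ : DifferentiableOn ℝ (fun z : E × ℝ => ψ z.1 z.2) (Set.univ ×ˢ Set.Ici 0))
    (hη : ContDiffOn ℝ 1 (fun z : E × ℝ => η z.1 z.2) (Set.univ ×ˢ Set.Ici 0))
    (hψθ : ∀ F θ, 0 < θ → η F θ = -deriv (ψ F) θ)
    (hηθ : ∀ F θ, 0 ≤ θ → 0 < derivWithin (η F) (Set.Ici 0) θ) (A : ℝ) :
    ∃ m > (0 : ℝ), ∀ F θ θb, (F, θ) ∈ stateCylinder E A → (F, θb) ∈ stateCylinder E A →
      m / 2 * (θ - θb) ^ 2 ≤ ψ F θ - ψ F θb + η F θ * (θ - θb) := by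
  have : ProperSpace E := FiniteDimensional.proper_real E
  obtain ⟨m, hm, hslope⟩ := (isCompact_stateCylinder A).exists_forall_le'
    ((continuousOn_derivWithin_snd hη (uniqueDiffOn_Ici 0)).mono (stateCylinder_subset A))
    fun z hz => hηθ z.1 z.2 hz.2.1
  refine ⟨m, hm, fun F θ θb hθ hθb => ?_⟩
  have hIcc : Set.Icc 0 A ⊆ Set.Ici (0 : ℝ) := fun _ ht => ht.1
  have hψF : DifferentiableOn ℝ (ψ F) (Set.Ici 0) :=
    hψ.comp (f := fun s => (F, s)) (by fun_prop) fun _ hs => ⟨trivial, hs⟩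
  have hηF : DifferentiableOn ℝ (η F) (Set.Ici 0) :=
    (hη.differentiableOn (by norm_num)).comp (f := fun s => (F, s)) (by fun_prop)
      fun _ hs => ⟨trivial, hs⟩
  have hnhds : ∀ t ∈ interior (Set.Icc 0 A), Set.Ici (0 : ℝ) ∈ 𝓝 t := fun t ht =>
    mem_interior_iff_mem_nhds.1 (interior_mono hIcc ht)
  have hquad := half_mul_sq_le_of_le_second_deriv (convex_Icc 0 A) (f := fun t => -ψ F t)
    (hψF.continuousOn.mono hIcc).neg
    (fun t ht => by
      have ht0 : 0 < t := by simpa using interior_mono hIcc ht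
      exact hψθ F t ht0 ▸ (hψF.differentiableAt (hnhds t ht)).hasDerivAt.fun_neg)
    (hηF.continuousOn.mono hIcc)
    (fun t ht => (hηF t (hIcc (interior_subset ht))).hasDerivWithinAt.hasDerivAt (hnhds t ht))
    (fun t ht => hslope (F, t) ⟨hθ.1, interior_subset ht⟩) hθ.2 hθb.2
  linarith [sub_sq_comm θ θb]

lemma exists_mul_sq_le_relativeTotalEnergy
    (hψ : ContDiffOn ℝ 2 (fun z : E × ℝ => ψ z.1 z.2) (Set.univ ×ˢ Set.Ici 0))
    (hη : ContDiffOn ℝ 1 (fun z : E × ℝ => η z.1 z.2) (Set.univ ×ˢ Set.Ici 0))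
    (hψF : ∀ F θ, 0 ≤ θ → Sig F θ = fderiv ℝ (fun F' => ψ F' θ) F)
    (hψθ : ∀ F θ, 0 < θ → η F θ = -deriv (ψ F) θ)
    (hψFF : ∀ F θ, 0 ≤ θ → ∀ V : E, V ≠ 0 →
      0 < iteratedFDeriv ℝ 2 (fun F' => ψ F' θ) F ![V, V])
    (hηθ : ∀ F θ, 0 ≤ θ → 0 < derivWithin (η F) (Set.Ici 0) θ) (A : ℝ) :
    ∃ K > (0 : ℝ), ∀ (F Fb : E) (v vb : W) (θ θb : ℝ),
      (F, θ) ∈ stateCylinder E A → (Fb, θb) ∈ stateCylinder E A →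
        K * (‖F - Fb‖ ^ 2 + |θ - θb| ^ 2 + ‖v - vb‖ ^ 2) ≤
          relativeTotalEnergy ψ η Sig F v θ Fb vb θb := by
  obtain ⟨k, hk, hdeformation⟩ := exists_half_mul_norm_sq_le_of_hessian_pos hψ hψFF A
  obtain ⟨m, hm, htemperature⟩ := exists_half_mul_sq_le_of_derivWithin_entropy_pos
    (hψ.differentiableOn (by norm_num)) hη hψθ hηθ A
  refine ⟨min (min (k / 2) (m / 2)) (1 / 2), by positivity, fun F Fb v vb θ θb hz hzb => ?_⟩
  rw [relativeTotalEnergy_eq_add, hψF Fb θb hzb.2.1]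
  calc min (min (k / 2) (m / 2)) (1 / 2) * (‖F - Fb‖ ^ 2 + |θ - θb| ^ 2 + ‖v - vb‖ ^ 2)
      ≤ k / 2 * ‖F - Fb‖ ^ 2 + m / 2 * (θ - θb) ^ 2 + 1 / 2 * ‖v - vb‖ ^ 2 := by
        rw [sq_abs, mul_add, mul_add]
        gcongr
        · exact (min_le_left _ _).trans (min_le_left _ _)
        · exact (min_le_left _ _).trans (min_le_right _ _)
        · exact min_le_right _ _
    _ ≤ _ := by
        gcongr
        · exact hdeformation F Fb θb ⟨hz.1, hzb.2⟩ hzb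
        · exact htemperature F θ θb hz ⟨hz.1, hzb.2⟩

theorem relative_total_energy_lower_bounds_general {p q : ℝ} (hp : 1 < p) (hq : 0 < q)
    (hψ : ContDiffOn ℝ 2 (fun z : E × ℝ => ψ z.1 z.2) (Set.univ ×ˢ Set.Ici 0))
    (hη : ContDiffOn ℝ 1 (fun z : E × ℝ => η z.1 z.2) (Set.univ ×ˢ Set.Ici 0))
    (hψF : ∀ F θ, 0 ≤ θ → Sig F θ = fderiv ℝ (fun F' => ψ F' θ) F)
    (hψθ : ∀ F θ, 0 < θ → η F θ = -deriv (ψ F) θ)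
    (hψFF : ∀ F θ, 0 ≤ θ → ∀ V : E, V ≠ 0 →
      0 < iteratedFDeriv ℝ 2 (fun F' => ψ F' θ) F ![V, V])
    (hηθ : ∀ F θ, 0 ≤ θ → 0 < derivWithin (η F) (Set.Ici 0) θ)
    {c : ℝ} (hc : 0 < c)
    (henergy : ∀ F θ, 0 ≤ θ → c * (‖F‖ ^ p + θ ^ q) - c ≤ ψ F θ + θ * η F θ)
    (hentropy : ∀ ε > (0 : ℝ), ∃ R₀, ∀ F θ, 0 ≤ θ → R₀ ≤ ‖F‖ ^ p + θ ^ q →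
      |η F θ| ≤ ε * (‖F‖ ^ p + θ ^ q))
    {M : ℝ} (hM : 0 < M) :
    ∃ R : ℝ, ∃ K₁ > (0 : ℝ), ∃ K₂ > (0 : ℝ), ∀ (Fb : E) (vb : W) (θb : ℝ),
      ‖Fb‖ ≤ M → ‖vb‖ ≤ M → 0 ≤ θb → θb ≤ M → ∀ (F : E) (v : W) (θ : ℝ), 0 ≤ θ →
        (R < ‖F‖ ^ p + θ ^ q + ‖v‖ ^ 2 →
          (1 / 2) * K₁ * (‖F‖ ^ p + θ ^ q + ‖v‖ ^ 2) ≤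
            relativeTotalEnergy ψ η Sig F v θ Fb vb θb) ∧
        (‖F‖ ^ p + θ ^ q + ‖v‖ ^ 2 ≤ R →
          K₂ * (‖F - Fb‖ ^ 2 + |θ - θb| ^ 2 + ‖v - vb‖ ^ 2) ≤
            relativeTotalEnergy ψ η Sig F v θ Fb vb θb) := by
  have hSig : ContinuousOn (fun z : E × ℝ => Sig z.1 z.2) (Set.univ ×ˢ Set.Ici 0) :=
    (contDiffOn_fderiv_fst (m := 0) hψ (by norm_num)).continuousOn.congr
      fun z hz => hψF z.1 z.2 hz.2
  obtain ⟨K₁, hK₁, C, hcoercive⟩ := exists_mul_growth_sub_le_relativeTotalEnergy (W := W) hp hq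
    hψ.continuousOn hη.continuousOn hSig hc henergy hentropy hM
  obtain ⟨A, hMA, hA⟩ := exists_stateCylinder_of_rpow_add_rpow_le (E := E)
    (zero_lt_one.trans hp) hq M (2 * C / K₁)
  obtain ⟨K₂, hK₂, hquadratic⟩ := exists_mul_sq_le_relativeTotalEnergy (W := W) hψ hη hψF hψθ
    hψFF hηθ A
  refine ⟨2 * C / K₁, K₁, hK₁, K₂, hK₂, fun Fb vb θb hFb hvb hθb hθbM F v θ hθ =>
    ⟨fun hlarge => ?_, fun hsmall => ?_⟩⟩
  · rw [div_lt_iff₀' hK₁] at hlarge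
    linarith [hcoercive Fb vb θb hFb hvb hθb hθbM F v θ hθ]
  · exact hquadratic F Fb v vb θ θb (hA F θ hθ (by linarith [sq_nonneg ‖v‖]))
      (mem_stateCylinder.2 ⟨hFb.trans hMA, hθb, hθbM.trans hMA⟩)

end RelativeEnergy

/-- **Lemma 5.2 (i): lower bounds for the relative total energy `I`.**
For `(F̄,v̄,θ̄) ∈ Γ_{M,δ}`, under the constitutive relations, the Gibbs conditions and
the growth hypotheses (a1)–(a3), there are `R = R(δ,M)` and `K₁, K₂ > 0` such that
`I ≥ ½K₁(|F|^p + θ^q + |v|²)` when `|F|^p + θ^q + |v|² > R`, and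
`I ≥ K₂(|F−F̄|² + |θ−θ̄|² + |v−v̄|²)` when `|F|^p + θ^q + |v|² ≤ R`. -/
theorem relative_total_energy_lower_bounds
    (d : ℕ) (p q : ℝ) (hp : 1 < p) (hq : 1 < q)
    (ψ : EuclideanSpace ℝ (Fin d × Fin d) → ℝ → ℝ)
    (Sig : EuclideanSpace ℝ (Fin d × Fin d) → ℝ → EuclideanSpace ℝ (Fin d × Fin d))
    (η : EuclideanSpace ℝ (Fin d × Fin d) → ℝ → ℝ)
    -- regularity: ψ ∈ C³, η, Σ ∈ C² on ℝ^{d×d} × [0,∞)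
    (hψreg : ContDiffOn ℝ 3 (fun z : EuclideanSpace ℝ (Fin d × Fin d) × ℝ => ψ z.1 z.2)
      (Set.univ ×ˢ Set.Ici 0))
    (hηreg : ContDiffOn ℝ 2 (fun z : EuclideanSpace ℝ (Fin d × Fin d) × ℝ => η z.1 z.2)
      (Set.univ ×ˢ Set.Ici 0))
    (hSigreg : ContDiffOn ℝ 2 (fun z : EuclideanSpace ℝ (Fin d × Fin d) × ℝ => Sig z.1 z.2)
      (Set.univ ×ˢ Set.Ici 0))
    -- constitutive relations: Σ = ∂ψ/∂F, η = −∂ψ/∂θ (and e = ψ + θη)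
    (hconstSig : ∀ F θ, 0 ≤ θ → ∀ V, ⟪Sig F θ, V⟫ = fderiv ℝ (fun F' => ψ F' θ) F V)
    (hconstη : ∀ F θ, 0 ≤ θ → η F θ = - deriv (fun s => ψ F s) θ)
    -- Gibbs thermodynamic stability: ψ_FF > 0 and η_θ > 0
    (hGibbsF : ∀ F θ, 0 ≤ θ → ∀ V : EuclideanSpace ℝ (Fin d × Fin d), V ≠ 0 →
      0 < iteratedFDeriv ℝ 2 (fun F' => ψ F' θ) F ![V, V])
    (hGibbsθ : ∀ F θ, 0 ≤ θ → 0 < deriv (fun s => η F s) θ)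
    -- (a1): growth of the internal energy e = ψ + θ η
    (c : ℝ) (hc : 0 < c)
    (ha1 : ∀ F θ, 0 ≤ θ →
      c * (‖F‖ ^ p + θ ^ q) - c ≤ ψ F θ + θ * η F θ ∧
      ψ F θ + θ * η F θ ≤ c * (‖F‖ ^ p + θ ^ q) + c)
    -- (a2): |Σ(F,θ)|/(|F|^p + θ^q) → 0
    (ha2 : ∀ ε > (0:ℝ), ∃ R₀, ∀ F θ, 0 ≤ θ → R₀ ≤ ‖F‖ ^ p + θ ^ q →
      ‖Sig F θ‖ ≤ ε * (‖F‖ ^ p + θ ^ q))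
    -- (a3): |η(F,θ)|/(|F|^p + θ^q) → 0
    (ha3 : ∀ ε > (0:ℝ), ∃ R₀, ∀ F θ, 0 ≤ θ → R₀ ≤ ‖F‖ ^ p + θ ^ q →
      |η F θ| ≤ ε * (‖F‖ ^ p + θ ^ q))
    -- the compact set Γ_{M,δ}
    (M δ : ℝ) (hM : 0 < M) (hδ : 0 < δ) :
    ∃ R : ℝ, ∃ K₁ > (0:ℝ), ∃ K₂ > (0:ℝ),
      ∀ (Fb : EuclideanSpace ℝ (Fin d × Fin d)) (vb : EuclideanSpace ℝ (Fin d)) (θb : ℝ),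
        ‖Fb‖ ≤ M → ‖vb‖ ≤ M → δ ≤ θb → θb ≤ M →
        ∀ (F : EuclideanSpace ℝ (Fin d × Fin d)) (v : EuclideanSpace ℝ (Fin d)) (θ : ℝ),
          0 ≤ θ →
          (R < ‖F‖ ^ p + θ ^ q + ‖v‖ ^ 2 →
            (1/2) * K₁ * (‖F‖ ^ p + θ ^ q + ‖v‖ ^ 2) ≤
              (ψ F θ - ψ Fb θb - ⟪Sig Fb θb, F - Fb⟫ + η Fb θb * (θ - θb))
                + (η F θ - η Fb θb) * (θ - θb) + (1/2) * ‖v - vb‖ ^ 2) ∧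
          (‖F‖ ^ p + θ ^ q + ‖v‖ ^ 2 ≤ R →
            K₂ * (‖F - Fb‖ ^ 2 + |θ - θb| ^ 2 + ‖v - vb‖ ^ 2) ≤
              (ψ F θ - ψ Fb θb - ⟪Sig Fb θb, F - Fb⟫ + η Fb θb * (θ - θb))
                + (η F θ - η Fb θb) * (θ - θb) + (1/2) * ‖v - vb‖ ^ 2) := by
  obtain ⟨R, K₁, hK₁, K₂, hK₂, hbounds⟩ := relative_total_energy_lower_bounds_general
    (W := EuclideanSpace ℝ (Fin d)) (Sig := fun F θ => innerSL ℝ (Sig F θ)) hp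
    (zero_lt_one.trans hq) (hψreg.of_le (by norm_num)) (hηreg.of_le (by norm_num))
    (fun F θ hθ => ContinuousLinearMap.ext fun V => hconstSig F θ hθ V)
    (fun F θ hθ => hconstη F θ hθ.le) hGibbsF
    (fun F θ hθ => (hGibbsθ F θ hθ).trans_eq
      ((differentiableAt_of_deriv_ne_zero (hGibbsθ F θ hθ).ne').derivWithin
        (uniqueDiffOn_Ici 0 θ hθ)).symm)
    hc (fun F θ hθ => (ha1 F θ hθ).1) ha3 hM
  exact ⟨R, K₁, hK₁, K₂, hK₂, fun Fb vb θb hFb hvb hθb =>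
    hbounds Fb vb θb hFb hvb (hδ.le.trans hθb)⟩
end
end

section
/- Control of the relative stress by the relative total energy (Lemma on I, part (iii)): Assume (F̄, v̄, θ̄) ∈ Γ_{M,δ}, that ψ(F,θ) ∈ C³(ℝ^{d×d} × [0,∞)) and η(F,θ), Σ(F,θ) ∈ C²(ℝ^{d×d} × [0,∞)) satisfy the constitutive relations Σ = ∂ψ/∂F, η = −∂ψ/∂θ, e = ψ + θη, and the Gibbs conditions ψ_FF > 0 and η_θ > 0. Under the growth hypotheses (a1), (a2), (a3), there exists a constant C > 0 such that |Σ(F,θ|F̄,θ̄)| ≤ C · I(F,v,θ|F̄,v̄,θ̄) for all (F,v,θ) and for all (F̄, v̄, θ̄) ∈ Γ_{M,δ}, where Σ(F,θ|F̄,θ̄) = Σ(F,θ) − Σ(F̄,θ̄) − Σ_F(F̄,θ̄):(F − F̄) − Σ_θ(F̄,θ̄)(θ − θ̄) is the second-order Taylor remainder of the stress. -/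
open scoped RealInnerProductSpace Topology
open MeasureTheory

noncomputable section

/-!
For `z = (F, θ)` and `z̄ = (F̄, θ̄)` the relative total energy without its kinetic part is the sum
of `ψ(F, θ̄) - ψ(F̄, θ̄) - Σ(F̄, θ̄) : (F - F̄)` and `ψ(F, θ) - ψ(F, θ̄) + η(F, θ)(θ - θ̄)`, the
Bregman divergences of the convex functions `ψ(·, θ̄)` and `-ψ(F, ·)`. On compact sets both
functions are uniformly convex, so this sum is at least `m |z - z̄|²`, while Taylor's formula
bounds the relative stress by `L |z - z̄|²`. For large `z` the relative energy differs from the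
internal energy `e(z)` by a term affine in `F` and `η(z)`, which is negligible against `e(z)`,
while the relative stress is at most of the order of `Σ(z)` and `z`, hence of `e(z)`.
-/

open Asymptotics Bornology Filter Set

section Calculus

theorem hasFDerivWithinAt_slice_fst {𝕜 X Y G : Type*} [NontriviallyNormedField 𝕜]
    [NormedAddCommGroup X] [NormedSpace 𝕜 X] [NormedAddCommGroup Y] [NormedSpace 𝕜 Y]
    [NormedAddCommGroup G] [NormedSpace 𝕜 G] {f : X × Y → G} {f' : X × Y →L[𝕜] G}
    {s : Set X} {t : Set Y} {x : X} {y : Y} (hf : HasFDerivWithinAt f f' (s ×ˢ t) (x, y))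
    (hy : y ∈ t) :
    HasFDerivWithinAt (fun x' ↦ f (x', y)) (f'.comp (.inl 𝕜 X Y)) s x :=
  hf.comp x (hasFDerivAt_prodMk_left x y).hasFDerivWithinAt fun _ hx ↦ mk_mem_prod hx hy

theorem hasFDerivWithinAt_slice_snd {𝕜 X Y G : Type*} [NontriviallyNormedField 𝕜]
    [NormedAddCommGroup X] [NormedSpace 𝕜 X] [NormedAddCommGroup Y] [NormedSpace 𝕜 Y]
    [NormedAddCommGroup G] [NormedSpace 𝕜 G] {f : X × Y → G} {f' : X × Y →L[𝕜] G}
    {s : Set X} {t : Set Y} {x : X} {y : Y} (hf : HasFDerivWithinAt f f' (s ×ˢ t) (x, y))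
    (hx : x ∈ s) :
    HasFDerivWithinAt (fun y' ↦ f (x, y')) (f'.comp (.inr 𝕜 X Y)) t y :=
  hf.comp y (hasFDerivAt_prodMk_right x y).hasFDerivWithinAt fun _ hy ↦ ⟨hx, hy⟩

variable {X Y : Type*} [NormedAddCommGroup X] [NormedSpace ℝ X] [NormedAddCommGroup Y]
  [NormedSpace ℝ Y] {K S : Set X}

theorem norm_sub_sub_le_of_hasFDerivWithinAt_lipschitzOnWith (hK : Convex ℝ K) {f : X → Y}
    {f' : X → X →L[ℝ] Y} (hf : ∀ x ∈ K, HasFDerivWithinAt f (f' x) K x) {L : NNReal}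
    (hL : LipschitzOnWith L f' K) {x y : X} (hx : x ∈ K) (hy : y ∈ K) :
    ‖f y - f x - f' x (y - x)‖ ≤ L * ‖y - x‖ ^ 2 := by
  have hseg : segment ℝ x y ⊆ K := hK.segment_subset hx hy
  have hbound : ∀ z ∈ segment ℝ x y, ‖f' z - f' x‖ ≤ L * ‖y - x‖ := fun z hz ↦
    (hL.norm_sub_le (hseg hz) hx).trans (by gcongr; exact norm_sub_le_of_mem_segment hz)
  rw [pow_two, ← mul_assoc]
  exact (convex_segment x y).norm_image_sub_le_of_norm_hasFDerivWithin_le'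
    (fun z hz ↦ (hf z (hseg hz)).mono hseg) hbound (left_mem_segment ℝ x y)
    (right_mem_segment ℝ x y)

theorem exists_norm_sub_sub_fderivWithin_le_mul_norm_sq (hS : UniqueDiffOn ℝ S) {f : X → Y}
    (hf : ContDiffOn ℝ 2 f S) (hK : IsCompact K) (hKc : Convex ℝ K) (hKS : K ⊆ S) :
    ∃ L ≥ 0, ∀ x ∈ K, ∀ y ∈ K,
      ‖f y - f x - fderivWithin ℝ f S x (y - x)‖ ≤ L * ‖y - x‖ ^ 2 := by
  have hf' : ContDiffOn ℝ 1 (fderivWithin ℝ f S) S := hf.fderivWithin hS (by norm_num)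
  obtain ⟨L, hL⟩ := (hf'.mono hKS).exists_lipschitzOnWith one_ne_zero hKc hK
  exact ⟨L, L.2, fun x hx y hy ↦ norm_sub_sub_le_of_hasFDerivWithinAt_lipschitzOnWith hKc
    (fun z hz ↦ (hf.differentiableOn two_ne_zero z (hKS hz)).hasFDerivWithinAt.mono hKS) hL hx hy⟩

theorem half_le_sub_sub_of_le_second_deriv {h h' h'' : ℝ → ℝ} {a : ℝ}
    (hh : ∀ t ∈ Icc (0 : ℝ) 1, HasDerivWithinAt h (h' t) (Icc 0 1) t)
    (hh' : ∀ t ∈ Icc (0 : ℝ) 1, HasDerivWithinAt h' (h'' t) (Icc 0 1) t)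
    (ha : ∀ t ∈ Icc (0 : ℝ) 1, a ≤ h'' t) : a / 2 ≤ h 1 - h 0 - h' 0 := by
  have hd : ∀ t ∈ Icc (0 : ℝ) 1,
      HasDerivWithinAt (fun t ↦ h t - a / 2 * t ^ 2) (h' t - a * t) (Icc 0 1) t := fun t ht ↦
    ((hh t ht).sub (((hasDerivWithinAt_id t _).pow 2).const_mul (a / 2))).congr_deriv
      (by simp only [Nat.cast_ofNat, id_eq, Nat.add_one_sub_one, pow_one, mul_one]; ring)
  have hd' : ∀ t ∈ Icc (0 : ℝ) 1,
      HasDerivWithinAt (fun t ↦ h' t - a * t) (h'' t - a) (Icc 0 1) t := fun t ht ↦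
    ((hh' t ht).sub ((hasDerivWithinAt_id t _).const_mul a)).congr_deriv (by ring)
  have hconv : ConvexOn ℝ (Icc 0 1) fun t ↦ h t - a / 2 * t ^ 2 :=
    convexOn_of_hasDerivWithinAt2_nonneg (convex_Icc 0 1)
      (fun t ht ↦ (hd t ht).continuousWithinAt)
      (fun t ht ↦ (hd t (interior_subset ht)).mono interior_subset)
      (fun t ht ↦ (hd' t (interior_subset ht)).mono interior_subset)
      fun t ht ↦ sub_nonneg.2 (ha t (interior_subset ht))
  have h0 : (0 : ℝ) ∈ Icc (0 : ℝ) 1 := left_mem_Icc.2 zero_le_one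
  have hslope := hconv.le_slope_of_hasDerivWithinAt h0 (right_mem_Icc.2 zero_le_one) one_pos
    (hd 0 h0)
  simp only [slope_def_field] at hslope
  linarith

theorem half_mul_norm_sq_le_sub_sub_of_le_second_fderiv (hK : Convex ℝ K) {f : X → ℝ}
    {f' : X → X →L[ℝ] ℝ} {f'' : X → X →L[ℝ] X →L[ℝ] ℝ} {m : ℝ}
    (hf : ∀ x ∈ K, HasFDerivWithinAt f (f' x) K x)
    (hf' : ∀ x ∈ K, HasFDerivWithinAt f' (f'' x) K x)
    (hm : ∀ x ∈ K, ∀ v, m * ‖v‖ ^ 2 ≤ f'' x v v) {x y : X} (hx : x ∈ K) (hy : y ∈ K) :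
    m / 2 * ‖y - x‖ ^ 2 ≤ f y - f x - f' x (y - x) := by
  have hmaps : MapsTo (fun t : ℝ ↦ x + t • (y - x)) (Icc 0 1) K := fun t ht ↦
    hK.add_smul_sub_mem hx hy ht
  have hline : ∀ t : ℝ, HasDerivWithinAt (fun t : ℝ ↦ x + t • (y - x)) (y - x) (Icc 0 1) t :=
    fun t ↦ by simpa using ((hasDerivWithinAt_id t (Icc 0 1)).smul_const (y - x)).const_add x
  have hh (t) (ht : t ∈ Icc (0 : ℝ) 1) : HasDerivWithinAt (fun t : ℝ ↦ f (x + t • (y - x)))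
      (f' (x + t • (y - x)) (y - x)) (Icc 0 1) t :=
    (hf _ (hmaps ht)).comp_hasDerivWithinAt t (hline t) hmaps
  have hh' (t) (ht : t ∈ Icc (0 : ℝ) 1) :
      HasDerivWithinAt (fun t : ℝ ↦ f' (x + t • (y - x)) (y - x))
        (f'' (x + t • (y - x)) (y - x) (y - x)) (Icc 0 1) t := by
    have hcomp : HasDerivWithinAt (fun t : ℝ ↦ f' (x + t • (y - x)))
        (f'' (x + t • (y - x)) (y - x)) (Icc 0 1) t :=
      (hf' _ (hmaps ht)).comp_hasDerivWithinAt t (hline t) hmaps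
    simpa using hcomp.clm_apply (hasDerivWithinAt_const t _ (y - x))
  have h := half_le_sub_sub_of_le_second_deriv hh hh' fun t ht ↦ hm _ (hmaps ht) (y - x)
  simpa [mul_div_right_comm] using h

theorem exists_pos_forall_mul_norm_sq_le_of_isCompact [FiniteDimensional ℝ X] {Z : Type*}
    [TopologicalSpace Z] {K : Set Z} (hK : IsCompact K) {B : Z → X →L[ℝ] X →L[ℝ] ℝ}
    (hB : ContinuousOn B K) (hpos : ∀ z ∈ K, ∀ v ≠ 0, 0 < B z v v) :
    ∃ m > 0, ∀ z ∈ K, ∀ v, m * ‖v‖ ^ 2 ≤ B z v v := by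
  have hcont : ContinuousOn (fun w : Z × X ↦ B w.1 w.2 w.2) (K ×ˢ Metric.sphere 0 1) :=
    ((hB.comp continuousOn_fst fun _ hw ↦ hw.1).clm_apply continuousOn_snd).clm_apply
      continuousOn_snd
  obtain ⟨m, hm, hle⟩ := (hK.prod (isCompact_sphere (0 : X) 1)).exists_forall_le' hcont
    fun w hw ↦ hpos w.1 hw.1 w.2 (ne_zero_of_mem_unit_sphere ⟨w.2, hw.2⟩)
  refine ⟨m, hm, fun z hz v ↦ ?_⟩
  obtain rfl | hv := eq_or_ne v 0
  · simp
  have hunit := hle (z, ‖v‖⁻¹ • v) ⟨hz, by simp [norm_smul, hv]⟩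
  have hv' : 0 < ‖v‖ := norm_pos_iff.2 hv
  simp only [map_smul, smul_apply, smul_eq_mul] at hunit
  field_simp at hunit
  linarith

theorem le_rpow_add_one {x p : ℝ} (hx : 0 ≤ x) (hp : 1 ≤ p) : x ≤ x ^ p + 1 := by
  rcases le_total x 1 with hx1 | hx1
  · exact hx1.trans (le_add_of_nonneg_left (Real.rpow_nonneg hx p))
  · exact (Real.self_le_rpow_of_one_le hx1 hp).trans (le_add_of_nonneg_right zero_le_one)

theorem id_isLittleO_rpow_atTop {p : ℝ} (hp : 1 < p) : id =o[atTop] fun x : ℝ ↦ x ^ p := by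
  refine isLittleO_of_tendsto' ?_
    ((tendsto_rpow_atTop (sub_pos.2 hp)).inv_tendsto_atTop.congr' ?_)
  · filter_upwards [eventually_gt_atTop 0] with x hx hxp
    exact absurd hxp (Real.rpow_pos_of_pos hx p).ne'
  · filter_upwards [eventually_gt_atTop 0] with x hx
    simp [Real.rpow_sub_one hx.ne']

end Calculus

/-- The closed half-space `E × [0, ∞)` of pairs (deformation gradient, temperature). -/
def stateSpace (E : Type*) : Set (E × ℝ) := univ ×ˢ Ici 0

section Growth

variable {E : Type*} [NormedAddCommGroup E] {ψ : E × ℝ → ℝ} {Sig : E × ℝ → E} {η : E × ℝ → ℝ}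

theorem stateSpace_inter_closedBall_subset (r : ℝ) :
    stateSpace E ∩ Metric.closedBall 0 r ⊆ Metric.closedBall 0 r ×ˢ Icc 0 r := by
  rintro ⟨F, θ⟩ ⟨⟨-, hθ⟩, hr⟩
  rw [mem_closedBall_zero_iff, Prod.norm_def, sup_le_iff] at hr
  exact ⟨mem_closedBall_zero_iff.2 hr.1, hθ, (Real.le_norm_self θ).trans hr.2⟩

theorem stateSpace_subset_closure : stateSpace E ⊆ closure (univ ×ˢ Ioi 0) := by
  rw [closure_prod_eq, closure_univ, closure_Ioi]
  rfl

/-- The internal energy `e = ψ + θ η`. -/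
def internalEnergy (ψ η : E × ℝ → ℝ) (z : E × ℝ) : ℝ := ψ z + z.2 * η z

/-- The filter of states `(F, θ)` with `θ ≥ 0` and `|(F, θ)| → ∞`. -/
def largeStates (E : Type*) [NormedAddCommGroup E] : Filter (E × ℝ) :=
  cobounded (E × ℝ) ⊓ 𝓟 (stateSpace E)

/-- Growth conditions relative to the internal energy `e`: at large states, `F` and `η` are
negligible against `e`, while `θ` and `Σ` are at most of its order. They follow from power growth of
`e` together with (a2) and (a3). -/
structure HasDominantEnergy (ψ : E × ℝ → ℝ) (Sig : E × ℝ → E) (η : E × ℝ → ℝ) : Prop where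
  energy_nonneg : ∀ᶠ z in largeStates E, 0 ≤ internalEnergy ψ η z
  fst_isLittleO : Prod.fst =o[largeStates E] internalEnergy ψ η
  snd_isBigO : Prod.snd =O[largeStates E] internalEnergy ψ η
  stress_isBigO : Sig =O[largeStates E] internalEnergy ψ η
  entropy_isLittleO : η =o[largeStates E] internalEnergy ψ η

theorem HasDominantEnergy.id_isBigO (h : HasDominantEnergy ψ Sig η) :
    id =O[largeStates E] internalEnergy ψ η :=
  h.fst_isLittleO.isBigO.prod_left h.snd_isBigO

theorem HasDominantEnergy.one_isLittleO (h : HasDominantEnergy ψ Sig η) :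
    (fun _ ↦ 1 : E × ℝ → ℝ) =o[largeStates E] internalEnergy ψ η :=
  ((isLittleO_const_id_cobounded 1).mono inf_le_left).trans_isBigO h.id_isBigO

/-- The weight `|F|^p + θ^q` of the growth hypotheses (a1)–(a3). -/
def growthWeight (p q : ℝ) (z : E × ℝ) : ℝ := ‖z.1‖ ^ p + z.2 ^ q

variable {p q : ℝ}

theorem eventually_mem_stateSpace : ∀ᶠ z in largeStates E, z ∈ stateSpace E :=
  mem_inf_of_right (mem_principal_self _)

theorem tendsto_growthWeight_atTop (hp : 1 ≤ p) (hq : 1 ≤ q) :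
    Tendsto (growthWeight p q) (largeStates E) atTop := by
  refine tendsto_atTop_mono' _ ?_
    (tendsto_atTop_add_const_right _ (-1) (tendsto_norm_cobounded_atTop.mono_left inf_le_left))
  filter_upwards [eventually_mem_stateSpace] with z ⟨_, hθ⟩
  have hF := le_rpow_add_one (norm_nonneg z.1) hp
  have hθ' := le_rpow_add_one hθ hq
  rw [← sub_eq_add_neg, sub_le_iff_le_add, Prod.norm_def, Real.norm_of_nonneg hθ, growthWeight]
  exact max_le (by linarith [Real.rpow_nonneg hθ q])
    (by linarith [Real.rpow_nonneg (norm_nonneg z.1) p])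

theorem fst_isLittleO_growthWeight (hp : 1 < p) (hq : 1 ≤ q) :
    Prod.fst =o[largeStates E] growthWeight p q := by
  refine isLittleO_iff.2 fun ε hε ↦ ?_
  obtain ⟨T, hT⟩ := eventually_atTop.1 ((id_isLittleO_rpow_atTop hp).bound hε)
  filter_upwards [eventually_mem_stateSpace,
    (tendsto_growthWeight_atTop hp.le hq).eventually_ge_atTop (T / ε)] with z ⟨_, hθ⟩ hz
  rcases le_total ‖z.1‖ T with hzT | hzT
  · calc ‖z.1‖ ≤ T := hzT
      _ ≤ ε * growthWeight p q z := (div_le_iff₀' hε).1 hz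
      _ ≤ ε * ‖growthWeight p q z‖ := by gcongr; exact Real.le_norm_self _
  · have hbound := hT ‖z.1‖ hzT
    rw [id, norm_norm, Real.norm_of_nonneg (by positivity)] at hbound
    calc ‖z.1‖ ≤ ε * ‖z.1‖ ^ p := hbound
      _ ≤ ε * growthWeight p q z := by
        gcongr
        exact le_add_of_nonneg_right (Real.rpow_nonneg hθ q)
      _ ≤ ε * ‖growthWeight p q z‖ := by gcongr; exact Real.le_norm_self _

theorem snd_isBigO_growthWeight (hp : 1 ≤ p) (hq : 1 ≤ q) :
    Prod.snd =O[largeStates E] growthWeight p q := by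
  refine IsBigO.of_bound 2 ?_
  filter_upwards [eventually_mem_stateSpace,
    (tendsto_growthWeight_atTop hp hq).eventually_ge_atTop 1] with z ⟨_, hθ⟩ hz
  have hF : 0 ≤ ‖z.1‖ ^ p := by positivity
  calc ‖z.2‖ = z.2 := Real.norm_of_nonneg hθ
    _ ≤ z.2 ^ q + 1 := le_rpow_add_one hθ hq
    _ ≤ 2 * growthWeight p q z := by
      rw [growthWeight] at hz ⊢
      linarith
    _ ≤ 2 * ‖growthWeight p q z‖ := by gcongr; exact Real.le_norm_self _

theorem isLittleO_growthWeight {G : Type*} [SeminormedAddCommGroup G] {f : E × ℝ → G}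
    (hp : 1 ≤ p) (hq : 1 ≤ q)
    (hf : ∀ ε > (0 : ℝ), ∃ R, ∀ F θ, 0 ≤ θ → R ≤ ‖F‖ ^ p + θ ^ q →
      ‖f (F, θ)‖ ≤ ε * (‖F‖ ^ p + θ ^ q)) :
    f =o[largeStates E] growthWeight p q := by
  refine isLittleO_iff.2 fun ε hε ↦ ?_
  obtain ⟨R, hR⟩ := hf ε hε
  filter_upwards [eventually_mem_stateSpace,
    (tendsto_growthWeight_atTop hp hq).eventually_ge_atTop R] with z ⟨_, hθ⟩ hz
  refine (hR z.1 z.2 hθ hz).trans ?_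
  gcongr
  exact Real.le_norm_self _

theorem HasDominantEnergy.of_growthWeight (hp : 1 < p) (hq : 1 ≤ q) {c : ℝ} (hc : 0 < c)
    (henergy : ∀ z ∈ stateSpace E, c * growthWeight p q z - c ≤ internalEnergy ψ η z)
    (hSig : Sig =O[largeStates E] growthWeight p q) (hη : η =o[largeStates E] growthWeight p q) :
    HasDominantEnergy ψ Sig η := by
  have hlower : ∀ᶠ z in largeStates E,
      2 ≤ growthWeight p q z ∧ c / 2 * growthWeight p q z ≤ internalEnergy ψ η z := by
    filter_upwards [eventually_mem_stateSpace,
      (tendsto_growthWeight_atTop hp.le hq).eventually_ge_atTop 2] with z hz hz2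
    exact ⟨hz2, by nlinarith [henergy z hz]⟩
  have hweight : growthWeight p q =O[largeStates E] internalEnergy ψ η := by
    refine IsBigO.of_bound (2 / c) ?_
    filter_upwards [hlower] with z ⟨hz2, hz⟩
    rw [Real.norm_of_nonneg (by linarith), div_mul_eq_mul_div, le_div_iff₀ hc]
    linarith [Real.le_norm_self (internalEnergy ψ η z)]
  exact
    { energy_nonneg := hlower.mono fun z ⟨hz2, hz⟩ ↦
        (mul_nonneg (half_pos hc).le (zero_le_two.trans hz2)).trans hz
      fst_isLittleO := (fst_isLittleO_growthWeight hp hq).trans_isBigO hweight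
      snd_isBigO := (snd_isBigO_growthWeight hp.le hq).trans hweight
      stress_isBigO := hSig.trans hweight
      entropy_isLittleO := hη.trans_isBigO hweight }

end Growth

section Thermoelasticity

variable {E : Type*} [NormedAddCommGroup E] [InnerProductSpace ℝ E]

/-- Gibbs stability of a constitutive law: the Gibbs relation `dψ = Σ : dF - η dθ`, with
one-sided derivatives at `θ = 0`, together with `ψ_FF = Σ_F > 0` and `η_θ > 0`. -/
structure IsGibbsStable (ψ : E × ℝ → ℝ) (Sig : E × ℝ → E) (η : E × ℝ → ℝ) : Prop where
  hasFDerivWithinAt : ∀ z ∈ stateSpace E,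
    HasFDerivWithinAt ψ ((innerSL ℝ (Sig z)).coprod (innerSL ℝ (-η z))) (stateSpace E) z
  stress_pos : ∀ z ∈ stateSpace E, ∀ V ≠ 0, 0 < ⟪fderivWithin ℝ Sig (stateSpace E) z (V, 0), V⟫
  entropy_pos : ∀ z ∈ stateSpace E, 0 < fderivWithin ℝ η (stateSpace E) z (0, 1)

/-- The relative total energy `I(F, v, θ | F̄, v̄, θ̄)` without its kinetic part `|v - v̄|² / 2`. -/
def relativeEnergy (ψ : E × ℝ → ℝ) (Sig : E × ℝ → E) (η : E × ℝ → ℝ) (z zb : E × ℝ) : ℝ :=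
  (ψ z - ψ zb - ⟪Sig zb, z.1 - zb.1⟫ + η zb * (z.2 - zb.2)) + (η z - η zb) * (z.2 - zb.2)

/-- The relative stress `Σ(F, θ | F̄, θ̄)`, with the derivative at `(F̄, θ̄)` taken within the state
space, so that `θ̄ = 0` is allowed. -/
def relativeStress (Sig : E × ℝ → E) (z zb : E × ℝ) : E :=
  Sig z - Sig zb - fderivWithin ℝ Sig (stateSpace E) zb (z - zb)

variable {ψ : E × ℝ → ℝ} {Sig : E × ℝ → E} {η : E × ℝ → ℝ} {K : Set (E × ℝ)}

theorem uniqueDiffOn_stateSpace : UniqueDiffOn ℝ (stateSpace E) :=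
  uniqueDiffOn_univ.prod (uniqueDiffOn_Ici 0)

theorem internalEnergy_sub_relativeEnergy (z zb : E × ℝ) :
    internalEnergy ψ η z - relativeEnergy ψ Sig η z zb =
      zb.2 * η z + (ψ zb - ⟪Sig zb, zb.1⟫) + ⟪Sig zb, z.1⟫ := by
  rw [internalEnergy, relativeEnergy, inner_sub_right]
  ring

theorem relativeStress_eq_of_pos {F Fb : E} {θ θb : ℝ}
    (hSig : DifferentiableWithinAt ℝ Sig (stateSpace E) (Fb, θb)) (hθb : 0 < θb) :
    relativeStress Sig (F, θ) (Fb, θb) =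
      Sig (F, θ) - Sig (Fb, θb) - fderiv ℝ (fun F' ↦ Sig (F', θb)) Fb (F - Fb)
        - (θ - θb) • deriv (fun s ↦ Sig (Fb, s)) θb := by
  have hF := (hasFDerivWithinAt_slice_fst hSig.hasFDerivWithinAt hθb.le).hasFDerivAt univ_mem
  have hθ := (hasFDerivWithinAt_slice_snd hSig.hasFDerivWithinAt (mem_univ Fb)).hasFDerivAt
    (Ici_mem_nhds hθb)
  have hsplit : (F, θ) - (Fb, θb) = (F - Fb, (0 : ℝ)) + (θ - θb) • ((0 : E), (1 : ℝ)) := by simp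
  rw [relativeStress, hF.fderiv, hθ.hasDerivAt.deriv, hsplit, map_add, map_smul, sub_sub, sub_sub,
    sub_sub]
  rfl

section Compact

variable {A : Set E} {T : Set ℝ}

theorem IsGibbsStable.exists_mul_sq_le_sub_add_mul (h : IsGibbsStable ψ Sig η)
    (hη : ContDiffOn ℝ 1 η (stateSpace E)) (hA : IsCompact A) (hT : IsCompact T)
    (hTc : Convex ℝ T) (hT0 : T ⊆ Ici 0) :
    ∃ m > 0, ∀ F ∈ A, ∀ θ ∈ T, ∀ θb ∈ T,
      m * ‖θ - θb‖ ^ 2 ≤ ψ (F, θ) - ψ (F, θb) + η (F, θ) * (θ - θb) := by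
  have hsub : A ×ˢ T ⊆ stateSpace E := prod_mono (subset_univ A) hT0
  have hcont : ContinuousOn (fderivWithin ℝ η (stateSpace E)) (A ×ˢ T) :=
    (hη.continuousOn_fderivWithin uniqueDiffOn_stateSpace le_rfl).mono hsub
  obtain ⟨m, hm, hle⟩ := exists_pos_forall_mul_norm_sq_le_of_isCompact (hA.prod hT)
    (B := fun z ↦ (innerSL ℝ).comp ((fderivWithin ℝ η (stateSpace E) z).comp (.inr ℝ E ℝ)))
    (continuousOn_const.clm_comp (hcont.clm_comp continuousOn_const)) fun z hz s hs ↦ by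
      have hsmul : fderivWithin ℝ η (stateSpace E) z (0, s) =
          s * fderivWithin ℝ η (stateSpace E) z (0, 1) := by
        rw [← smul_eq_mul, ← map_smul]
        simp
      calc 0 < s * s * fderivWithin ℝ η (stateSpace E) z (0, 1) :=
            mul_pos (mul_self_pos.2 hs) (h.entropy_pos z (hsub hz))
        _ = _ := by
            simp only [ContinuousLinearMap.comp_apply, ContinuousLinearMap.inr_apply, hsmul,
              coe_innerSL_apply, RCLike.inner_apply, Real.ringHom_apply]
            ring
  refine ⟨m / 2, half_pos hm, fun F hF θ hθ θb hθb ↦ ?_⟩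
  have hbregman := half_mul_norm_sq_le_sub_sub_of_le_second_fderiv hTc
    (f := fun s ↦ -ψ (F, s)) (f' := fun s ↦ innerSL ℝ (η (F, s)))
    (fun s hs ↦ ?_) (fun s hs ↦ ?_) (fun s hs ↦ hle (F, s) ⟨hF, hs⟩) hθ hθb
  · rw [norm_sub_rev]
    refine hbregman.trans_eq ?_
    simp only [sub_neg_eq_add, coe_innerSL_apply, RCLike.inner_apply, Real.ringHom_apply]
    ring
  · exact ((hasFDerivWithinAt_slice_snd (h.hasFDerivWithinAt (F, s) (hsub ⟨hF, hs⟩))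
      (mem_univ F)).mono hT0).fun_neg.congr_fderiv (by ext; simp)
  · have hslice := (hasFDerivWithinAt_slice_snd (hη.differentiableOn one_ne_zero (F, s)
      (hsub ⟨hF, hs⟩)).hasFDerivWithinAt (mem_univ F)).mono hT0
    exact (innerSL ℝ).hasFDerivAt.comp_hasFDerivWithinAt s hslice

variable [FiniteDimensional ℝ E]

theorem IsGibbsStable.exists_mul_norm_sq_le_sub_sub_inner (h : IsGibbsStable ψ Sig η)
    (hSig : ContDiffOn ℝ 1 Sig (stateSpace E)) (hA : IsCompact A) (hAc : Convex ℝ A)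
    (hT : IsCompact T) (hT0 : T ⊆ Ici 0) :
    ∃ m > 0, ∀ F ∈ A, ∀ Fb ∈ A, ∀ θ ∈ T,
      m * ‖F - Fb‖ ^ 2 ≤ ψ (F, θ) - ψ (Fb, θ) - ⟪Sig (Fb, θ), F - Fb⟫ := by
  have hsub : A ×ˢ T ⊆ stateSpace E := prod_mono (subset_univ A) hT0
  have hcont : ContinuousOn (fderivWithin ℝ Sig (stateSpace E)) (A ×ˢ T) :=
    (hSig.continuousOn_fderivWithin uniqueDiffOn_stateSpace le_rfl).mono hsub
  obtain ⟨m, hm, hle⟩ := exists_pos_forall_mul_norm_sq_le_of_isCompact (hA.prod hT)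
    (B := fun z ↦ (innerSL ℝ).comp ((fderivWithin ℝ Sig (stateSpace E) z).comp (.inl ℝ E ℝ)))
    (continuousOn_const.clm_comp (hcont.clm_comp continuousOn_const))
    fun z hz ↦ h.stress_pos z (hsub hz)
  refine ⟨m / 2, half_pos hm, fun F hF Fb hFb θ hθ ↦ ?_⟩
  refine half_mul_norm_sq_le_sub_sub_of_le_second_fderiv hAc
    (f := fun F' ↦ ψ (F', θ)) (f' := fun F' ↦ innerSL ℝ (Sig (F', θ)))
    (fun F' hF' ↦ ?_) (fun F' hF' ↦ ?_) (fun F' hF' ↦ hle (F', θ) ⟨hF', hθ⟩) hFb hF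
  · simpa using (hasFDerivWithinAt_slice_fst
      (h.hasFDerivWithinAt (F', θ) (hsub ⟨hF', hθ⟩)) (hT0 hθ)).mono (subset_univ A)
  · have hslice := (hasFDerivWithinAt_slice_fst (hSig.differentiableOn one_ne_zero (F', θ)
      (hsub ⟨hF', hθ⟩)).hasFDerivWithinAt (hT0 hθ)).mono (subset_univ A)
    exact (innerSL ℝ).hasFDerivAt.comp_hasFDerivWithinAt F' hslice

theorem IsGibbsStable.exists_mul_norm_sq_le_relativeEnergy (h : IsGibbsStable ψ Sig η)
    (hSig : ContDiffOn ℝ 1 Sig (stateSpace E)) (hη : ContDiffOn ℝ 1 η (stateSpace E))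
    (hA : IsCompact A) (hAc : Convex ℝ A) (hT : IsCompact T) (hTc : Convex ℝ T)
    (hT0 : T ⊆ Ici 0) :
    ∃ m > 0, ∀ z ∈ A ×ˢ T, ∀ zb ∈ A ×ˢ T,
      m * ‖z - zb‖ ^ 2 ≤ relativeEnergy ψ Sig η z zb := by
  obtain ⟨m₁, hm₁, hF⟩ := h.exists_mul_norm_sq_le_sub_sub_inner hSig hA hAc hT hT0
  obtain ⟨m₂, hm₂, hθ⟩ := h.exists_mul_sq_le_sub_add_mul hη hA hT hTc hT0
  refine ⟨min m₁ m₂, lt_min hm₁ hm₂, fun z hz zb hzb ↦ ?_⟩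
  have hnorm : ‖z - zb‖ ^ 2 ≤ ‖z.1 - zb.1‖ ^ 2 + ‖z.2 - zb.2‖ ^ 2 := by
    rw [Prod.norm_def, Prod.fst_sub, Prod.snd_sub]
    rcases max_choice ‖z.1 - zb.1‖ ‖z.2 - zb.2‖ with hmax | hmax <;> rw [hmax] <;>
      linarith [sq_nonneg ‖z.1 - zb.1‖, sq_nonneg ‖z.2 - zb.2‖]
  calc min m₁ m₂ * ‖z - zb‖ ^ 2
      ≤ min m₁ m₂ * (‖z.1 - zb.1‖ ^ 2 + ‖z.2 - zb.2‖ ^ 2) := by gcongr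
    _ ≤ m₁ * ‖z.1 - zb.1‖ ^ 2 + m₂ * ‖z.2 - zb.2‖ ^ 2 := by
        rw [mul_add]
        gcongr
        exacts [min_le_left m₁ m₂, min_le_right m₁ m₂]
    _ ≤ _ := add_le_add (hF z.1 hz.1 zb.1 hzb.1 zb.2 hzb.2) (hθ z.1 hz.1 z.2 hz.2 zb.2 hzb.2)
    _ = relativeEnergy ψ Sig η z zb := by
        rw [relativeEnergy]
        ring

theorem IsGibbsStable.exists_norm_relativeStress_le_mul_of_isCompact (h : IsGibbsStable ψ Sig η)
    (hSig : ContDiffOn ℝ 2 Sig (stateSpace E)) (hη : ContDiffOn ℝ 1 η (stateSpace E))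
    (hA : IsCompact A) (hAc : Convex ℝ A) (hT : IsCompact T) (hTc : Convex ℝ T)
    (hT0 : T ⊆ Ici 0) :
    ∃ C, ∀ z ∈ A ×ˢ T, ∀ zb ∈ A ×ˢ T,
      0 ≤ relativeEnergy ψ Sig η z zb ∧
        ‖relativeStress Sig z zb‖ ≤ C * relativeEnergy ψ Sig η z zb := by
  obtain ⟨m, hm, hcoercive⟩ := h.exists_mul_norm_sq_le_relativeEnergy
    (hSig.of_le one_le_two) hη hA hAc hT hTc hT0
  obtain ⟨L, hL, htaylor⟩ := exists_norm_sub_sub_fderivWithin_le_mul_norm_sq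
    uniqueDiffOn_stateSpace hSig (hA.prod hT) (hAc.prod hTc) (prod_mono (subset_univ A) hT0)
  refine ⟨L / m, fun z hz zb hzb ↦
    ⟨(by positivity : 0 ≤ m * ‖z - zb‖ ^ 2).trans (hcoercive z hz zb hzb), ?_⟩⟩
  calc ‖relativeStress Sig z zb‖ ≤ L * ‖z - zb‖ ^ 2 := htaylor zb hzb z hz
    _ = L / m * (m * ‖z - zb‖ ^ 2) := by field_simp
    _ ≤ L / m * relativeEnergy ψ Sig η z zb := by gcongr; exact hcoercive z hz zb hzb

end Compact

section LargeStates

theorem exists_internalEnergy_sub_relativeEnergy_le (hK : IsCompact K) (hψ : ContinuousOn ψ K)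
    (hSig : ContinuousOn Sig K) :
    ∃ b, ∀ zb ∈ K, ∀ z,
      internalEnergy ψ η z - relativeEnergy ψ Sig η z zb ≤ b * (1 + ‖z.1‖ + ‖η z‖) := by
  obtain ⟨b, hb⟩ := hK.exists_bound_of_continuousOn
    (f := fun zb : E × ℝ ↦ (zb.2, ψ zb - ⟪Sig zb, zb.1⟫, Sig zb))
    (continuousOn_snd.prodMk ((hψ.sub (hSig.inner continuousOn_fst)).prodMk hSig))
  refine ⟨b, fun zb hzb z ↦ ?_⟩
  obtain ⟨hθ, hconst, hstress⟩ : ‖zb.2‖ ≤ b ∧ ‖ψ zb - ⟪Sig zb, zb.1⟫‖ ≤ b ∧ ‖Sig zb‖ ≤ b := by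
    simpa [Prod.norm_def] using hb zb hzb
  have hentropy : zb.2 * η z ≤ b * ‖η z‖ :=
    (Real.le_norm_self _).trans (norm_mul_le_of_le hθ le_rfl)
  have hwork : ⟪Sig zb, z.1⟫ ≤ b * ‖z.1‖ := (real_inner_le_norm _ _).trans (by gcongr)
  rw [internalEnergy_sub_relativeEnergy]
  linarith [(Real.le_norm_self _).trans hconst]

theorem HasDominantEnergy.eventually_half_internalEnergy_le (h : HasDominantEnergy ψ Sig η)
    (hK : IsCompact K) (hψ : ContinuousOn ψ K) (hSig : ContinuousOn Sig K) :
    ∀ᶠ z in largeStates E, ∀ zb ∈ K,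
      internalEnergy ψ η z / 2 ≤ relativeEnergy ψ Sig η z zb := by
  obtain ⟨b, hb⟩ := exists_internalEnergy_sub_relativeEnergy_le (η := η) hK hψ hSig
  have hsmall : (fun z ↦ b * (1 + ‖z.1‖ + ‖η z‖)) =o[largeStates E] internalEnergy ψ η :=
    ((h.one_isLittleO.add h.fst_isLittleO.norm_left).add
      h.entropy_isLittleO.norm_left).const_mul_left b
  filter_upwards [hsmall.bound one_half_pos, h.energy_nonneg] with z hz hnonneg zb hzb
  rw [Real.norm_of_nonneg hnonneg] at hz
  linarith [hb zb hzb z, Real.le_norm_self (b * (1 + ‖z.1‖ + ‖η z‖))]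

theorem HasDominantEnergy.exists_eventually_norm_relativeStress_le (h : HasDominantEnergy ψ Sig η)
    (hK : IsCompact K) (hKS : K ⊆ stateSpace E) (hSig : ContDiffOn ℝ 1 Sig (stateSpace E)) :
    ∃ C, ∀ᶠ z in largeStates E, ∀ zb ∈ K,
      ‖relativeStress Sig z zb‖ ≤ C * internalEnergy ψ η z := by
  have hDSig := (hSig.continuousOn_fderivWithin uniqueDiffOn_stateSpace le_rfl).mono hKS
  have hconst : ContinuousOn (fun zb ↦ Sig zb + fderivWithin ℝ Sig (stateSpace E) zb (-zb)) K :=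
    (hSig.continuousOn.mono hKS).add (hDSig.clm_apply continuous_neg.continuousOn)
  obtain ⟨b, hb⟩ := hK.exists_bound_of_continuousOn (hconst.prodMk hDSig)
  have hbig : (fun z ↦ ‖Sig z‖ + b * (1 + ‖z‖)) =O[largeStates E] internalEnergy ψ η :=
    h.stress_isBigO.norm_left.add
      ((h.one_isLittleO.isBigO.add h.id_isBigO.norm_left).const_mul_left b)
  obtain ⟨C, hC⟩ := hbig.bound
  refine ⟨C, ?_⟩
  filter_upwards [hC, h.energy_nonneg] with z hz hnonneg zb hzb
  obtain ⟨hconst, hlin⟩ : ‖Sig zb + fderivWithin ℝ Sig (stateSpace E) zb (-zb)‖ ≤ b ∧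
      ‖fderivWithin ℝ Sig (stateSpace E) zb‖ ≤ b := by
    simpa only [Prod.norm_def, sup_le_iff] using hb zb hzb
  rw [Real.norm_of_nonneg hnonneg] at hz
  calc ‖relativeStress Sig z zb‖
      = ‖Sig z - (Sig zb + fderivWithin ℝ Sig (stateSpace E) zb (-zb))
          - fderivWithin ℝ Sig (stateSpace E) zb z‖ := by
        rw [relativeStress, map_sub, map_neg]
        congr 1
        abel
    _ ≤ ‖Sig z‖ + b + b * ‖z‖ :=
        norm_sub_le_of_le (norm_sub_le_of_le le_rfl hconst)
          (ContinuousLinearMap.le_of_opNorm_le _ hlin z)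
    _ = ‖Sig z‖ + b * (1 + ‖z‖) := by ring
    _ ≤ C * internalEnergy ψ η z := (Real.le_norm_self _).trans hz

theorem HasDominantEnergy.exists_eventually_norm_relativeStress_le_mul
    (h : HasDominantEnergy ψ Sig η) (hK : IsCompact K) (hKS : K ⊆ stateSpace E)
    (hψ : ContinuousOn ψ K) (hSig : ContDiffOn ℝ 1 Sig (stateSpace E)) :
    ∃ C ≥ 0, ∀ᶠ z in largeStates E, ∀ zb ∈ K,
      0 ≤ relativeEnergy ψ Sig η z zb ∧
        ‖relativeStress Sig z zb‖ ≤ C * relativeEnergy ψ Sig η z zb := by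
  obtain ⟨C, hC⟩ := h.exists_eventually_norm_relativeStress_le hK hKS hSig
  refine ⟨max C 0 * 2, by positivity, ?_⟩
  filter_upwards [hC, h.energy_nonneg,
    h.eventually_half_internalEnergy_le hK hψ (hSig.continuousOn.mono hKS)]
    with z hstress hnonneg henergy zb hzb
  refine ⟨(div_nonneg hnonneg two_pos.le).trans (henergy zb hzb), ?_⟩
  calc ‖relativeStress Sig z zb‖ ≤ C * internalEnergy ψ η z := hstress zb hzb
    _ ≤ max C 0 * internalEnergy ψ η z := by gcongr; exact le_max_left C 0
    _ = max C 0 * 2 * (internalEnergy ψ η z / 2) := by ring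
    _ ≤ max C 0 * 2 * relativeEnergy ψ Sig η z zb := by gcongr; exact henergy zb hzb

end LargeStates

section ConstitutiveRelations

variable {F : E} {θ : ℝ}

theorem fderivWithin_stateSpace_apply_inl {G : Type*} [NormedAddCommGroup G] [NormedSpace ℝ G]
    {f : E × ℝ → G} (hf : DifferentiableWithinAt ℝ f (stateSpace E) (F, θ)) (hθ : 0 ≤ θ) (V : E) :
    fderivWithin ℝ f (stateSpace E) (F, θ) (V, 0) = fderiv ℝ (fun F' ↦ f (F', θ)) F V := by
  rw [((hasFDerivWithinAt_slice_fst hf.hasFDerivWithinAt hθ).hasFDerivAt univ_mem).fderiv]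
  rfl

theorem hasDerivWithinAt_slice_snd_stateSpace {f : E × ℝ → ℝ}
    (hf : DifferentiableWithinAt ℝ f (stateSpace E) (F, θ)) :
    HasDerivWithinAt (fun s ↦ f (F, s)) (fderivWithin ℝ f (stateSpace E) (F, θ) (0, 1))
      (Ici 0) θ :=
  (hasFDerivWithinAt_slice_snd hf.hasFDerivWithinAt (mem_univ F)).hasDerivWithinAt

theorem fderivWithin_stateSpace_apply_inr {f : E × ℝ → ℝ}
    (hf : DifferentiableWithinAt ℝ f (stateSpace E) (F, θ)) (hθ : 0 ≤ θ)
    (hslice : DifferentiableAt ℝ (fun s ↦ f (F, s)) θ) :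
    fderivWithin ℝ f (stateSpace E) (F, θ) (0, 1) = deriv (fun s ↦ f (F, s)) θ :=
  (uniqueDiffOn_Ici 0 θ hθ).eq_deriv _ (hasDerivWithinAt_slice_snd_stateSpace hf)
    hslice.hasDerivAt.hasDerivWithinAt

/- At `θ = 0` the two-sided derivative of `ψ` in `θ` may be a junk value, so the entropy relation
is obtained there from `θ > 0` by continuity. -/
theorem fderivWithin_stateSpace_apply_inr_eq_neg (hψ : ContDiffOn ℝ 1 ψ (stateSpace E))
    (hη : ContinuousOn η (stateSpace E))
    (hentropy : ∀ F θ, 0 < θ → η (F, θ) = -deriv (fun s ↦ ψ (F, s)) θ) :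
    EqOn (fun z ↦ fderivWithin ℝ ψ (stateSpace E) z (0, 1)) (fun z ↦ -η z) (stateSpace E) := by
  have hsub : univ ×ˢ Ioi 0 ⊆ stateSpace E := prod_mono subset_rfl Ioi_subset_Ici_self
  refine EqOn.of_subset_closure ?_ ((hψ.continuousOn_fderivWithin uniqueDiffOn_stateSpace
    le_rfl).clm_apply continuousOn_const) hη.neg hsub stateSpace_subset_closure
  rintro ⟨F, θ⟩ ⟨-, hθ⟩
  have hdiff := hψ.differentiableOn one_ne_zero (F, θ) ⟨mem_univ F, mem_Ici_of_Ioi hθ⟩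
  simp only [hentropy F θ hθ, neg_neg]
  exact fderivWithin_stateSpace_apply_inr hdiff (le_of_lt hθ)
    ((hasDerivWithinAt_slice_snd_stateSpace hdiff).hasDerivAt (Ici_mem_nhds hθ)).differentiableAt

theorem iteratedFDeriv_two_apply_eq_inner_fderiv {f : E → ℝ} {g : E → E}
    (hf : ∀ x v, ⟪g x, v⟫ = fderiv ℝ f x v) {x : E} (hg : DifferentiableAt ℝ g x) (v w : E) :
    iteratedFDeriv ℝ 2 f x ![v, w] = ⟪fderiv ℝ g x v, w⟫ := by
  have hfderiv : fderiv ℝ f = fun y ↦ innerSL ℝ (g y) := by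
    ext y u
    exact (hf y u).symm
  rw [iteratedFDeriv_two_apply, hfderiv,
    fderiv_fun_comp x (innerSL ℝ).differentiableAt hg, (innerSL ℝ).fderiv]
  rfl

theorem IsGibbsStable.of_partial_derivatives (hψ : ContDiffOn ℝ 1 ψ (stateSpace E))
    (hSig : DifferentiableOn ℝ Sig (stateSpace E)) (hη : DifferentiableOn ℝ η (stateSpace E))
    (hstress : ∀ F θ, 0 ≤ θ → ∀ V, ⟪Sig (F, θ), V⟫ = fderiv ℝ (fun F' ↦ ψ (F', θ)) F V)
    (hentropy : ∀ F θ, 0 < θ → η (F, θ) = -deriv (fun s ↦ ψ (F, s)) θ)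
    (hstress_pos : ∀ F θ, 0 ≤ θ → ∀ V ≠ 0,
      0 < iteratedFDeriv ℝ 2 (fun F' ↦ ψ (F', θ)) F ![V, V])
    (hentropy_pos : ∀ F θ, 0 ≤ θ → 0 < deriv (fun s ↦ η (F, s)) θ) :
    IsGibbsStable ψ Sig η where
  hasFDerivWithinAt := by
    rintro ⟨F, θ⟩ hz
    have hdiff := hψ.differentiableOn one_ne_zero (F, θ) hz
    refine hdiff.hasFDerivWithinAt.congr_fderiv (ContinuousLinearMap.prod_ext ?_ ?_)
    · ext V
      simpa [hstress F θ hz.2 V] using fderivWithin_stateSpace_apply_inl hdiff hz.2 V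
    · ext
      simpa using fderivWithin_stateSpace_apply_inr_eq_neg hψ hη.continuousOn hentropy hz
  stress_pos := by
    rintro ⟨F, θ⟩ hz V hV
    have hslice : DifferentiableAt ℝ (fun F' ↦ Sig (F', θ)) F :=
      ((hasFDerivWithinAt_slice_fst (hSig (F, θ) hz).hasFDerivWithinAt hz.2).hasFDerivAt
        univ_mem).differentiableAt
    rw [fderivWithin_stateSpace_apply_inl (hSig (F, θ) hz) hz.2,
      ← iteratedFDeriv_two_apply_eq_inner_fderiv (fun F' ↦ hstress F' θ hz.2) hslice]
    exact hstress_pos F θ hz.2 V hV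
  entropy_pos := by
    rintro ⟨F, θ⟩ hz
    have hpos := hentropy_pos F θ hz.2
    rwa [fderivWithin_stateSpace_apply_inr (hη (F, θ) hz) hz.2
      (differentiableAt_of_deriv_ne_zero hpos.ne')]

end ConstitutiveRelations

variable [FiniteDimensional ℝ E]

theorem relative_stress_controlled_by_relative_total_energy_general {W : Type*}
    [SeminormedAddCommGroup W] (hSig : ContDiffOn ℝ 2 Sig (stateSpace E))
    (hη : ContDiffOn ℝ 1 η (stateSpace E)) (hstable : IsGibbsStable ψ Sig η)
    (hgrowth : HasDominantEnergy ψ Sig η) (hK : IsCompact K) (hKS : K ⊆ stateSpace E) :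
    ∃ C > 0, ∀ zb ∈ K, ∀ z ∈ stateSpace E, ∀ v vb : W,
      ‖relativeStress Sig z zb‖ ≤
        C * (relativeEnergy ψ Sig η z zb + (1 / 2) * ‖v - vb‖ ^ 2) := by
  have hψ : ContinuousOn ψ K := fun z hz ↦
    (hstable.hasFDerivWithinAt z (hKS hz)).continuousWithinAt.mono hKS
  obtain ⟨C₁, hC₁, hfar⟩ := hgrowth.exists_eventually_norm_relativeStress_le_mul hK hKS hψ
    (hSig.of_le one_le_two)
  obtain ⟨r, -, hr⟩ := hasBasis_cobounded_norm.eventually_iff.1 (eventually_inf_principal.1 hfar)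
  obtain ⟨R, hR⟩ := hK.isBounded.subset_closedBall 0
  set ρ := max r R
  obtain ⟨C₂, hnear⟩ := hstable.exists_norm_relativeStress_le_mul_of_isCompact hSig hη
    (isCompact_closedBall (0 : E) ρ) (convex_closedBall 0 ρ) isCompact_Icc (convex_Icc 0 ρ)
    Icc_subset_Ici_self
  have hball {z : E × ℝ} (hz : z ∈ stateSpace E) (hzρ : ‖z‖ ≤ ρ) :
      z ∈ Metric.closedBall 0 ρ ×ˢ Icc 0 ρ :=
    stateSpace_inter_closedBall_subset ρ ⟨hz, mem_closedBall_zero_iff.2 hzρ⟩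
  refine ⟨max C₁ C₂ + 1, by positivity, fun zb hzb z hz v vb ↦ ?_⟩
  obtain ⟨C, hC, hnonneg, hle⟩ : ∃ C ≤ max C₁ C₂ + 1, 0 ≤ relativeEnergy ψ Sig η z zb ∧
      ‖relativeStress Sig z zb‖ ≤ C * relativeEnergy ψ Sig η z zb := by
    rcases le_total ‖z‖ ρ with hzρ | hzρ
    · have hzbρ : ‖zb‖ ≤ ρ := (mem_closedBall_zero_iff.1 (hR hzb)).trans (le_max_right r R)
      exact ⟨C₂, by linarith [le_max_right C₁ C₂],
        hnear z (hball hz hzρ) zb (hball (hKS hzb) hzbρ)⟩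
    · exact ⟨C₁, by linarith [le_max_left C₁ C₂], hr ((le_max_left r R).trans hzρ) hz zb hzb⟩
  calc ‖relativeStress Sig z zb‖ ≤ C * relativeEnergy ψ Sig η z zb := hle
    _ ≤ (max C₁ C₂ + 1) * (relativeEnergy ψ Sig η z zb + (1 / 2) * ‖v - vb‖ ^ 2) := by
      gcongr
      exact le_add_of_nonneg_right (by positivity)

end Thermoelasticity

/-- **Lemma 5.2 (iii): control of the relative stress by the relative total energy.**
For `(F̄,v̄,θ̄) ∈ Γ_{M,δ}`, under the constitutive relations, the Gibbs conditions and
the growth hypotheses (a1)–(a3), there is `C > 0` with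
`|Σ(F,θ|F̄,θ̄)| ≤ C · I(F,v,θ|F̄,v̄,θ̄)` for all `(F,v,θ)`, where
`Σ(F,θ|F̄,θ̄) = Σ(F,θ) − Σ(F̄,θ̄) − Σ_F(F̄,θ̄):(F−F̄) − Σ_θ(F̄,θ̄)(θ−θ̄)` is the
second-order Taylor remainder of the stress. -/
theorem relative_stress_controlled_by_relative_total_energy
    (d : ℕ) (p q : ℝ) (hp : 1 < p) (hq : 1 < q)
    (ψ : EuclideanSpace ℝ (Fin d × Fin d) → ℝ → ℝ)
    (Sig : EuclideanSpace ℝ (Fin d × Fin d) → ℝ → EuclideanSpace ℝ (Fin d × Fin d))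
    (η : EuclideanSpace ℝ (Fin d × Fin d) → ℝ → ℝ)
    -- regularity: ψ ∈ C³, η, Σ ∈ C² on ℝ^{d×d} × [0,∞)
    (hψreg : ContDiffOn ℝ 3 (fun z : EuclideanSpace ℝ (Fin d × Fin d) × ℝ => ψ z.1 z.2)
      (Set.univ ×ˢ Set.Ici 0))
    (hηreg : ContDiffOn ℝ 2 (fun z : EuclideanSpace ℝ (Fin d × Fin d) × ℝ => η z.1 z.2)
      (Set.univ ×ˢ Set.Ici 0))
    (hSigreg : ContDiffOn ℝ 2 (fun z : EuclideanSpace ℝ (Fin d × Fin d) × ℝ => Sig z.1 z.2)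
      (Set.univ ×ˢ Set.Ici 0))
    -- constitutive relations: Σ = ∂ψ/∂F, η = −∂ψ/∂θ (and e = ψ + θη)
    (hconstSig : ∀ F θ, 0 ≤ θ → ∀ V, ⟪Sig F θ, V⟫ = fderiv ℝ (fun F' => ψ F' θ) F V)
    (hconstη : ∀ F θ, 0 ≤ θ → η F θ = - deriv (fun s => ψ F s) θ)
    -- Gibbs thermodynamic stability: ψ_FF > 0 and η_θ > 0
    (hGibbsF : ∀ F θ, 0 ≤ θ → ∀ V : EuclideanSpace ℝ (Fin d × Fin d), V ≠ 0 →
      0 < iteratedFDeriv ℝ 2 (fun F' => ψ F' θ) F ![V, V])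
    (hGibbsθ : ∀ F θ, 0 ≤ θ → 0 < deriv (fun s => η F s) θ)
    -- (a1): growth of the internal energy e = ψ + θ η
    (c : ℝ) (hc : 0 < c)
    (ha1 : ∀ F θ, 0 ≤ θ →
      c * (‖F‖ ^ p + θ ^ q) - c ≤ ψ F θ + θ * η F θ ∧
      ψ F θ + θ * η F θ ≤ c * (‖F‖ ^ p + θ ^ q) + c)
    -- (a2): |Σ(F,θ)|/(|F|^p + θ^q) → 0
    (ha2 : ∀ ε > (0:ℝ), ∃ R₀, ∀ F θ, 0 ≤ θ → R₀ ≤ ‖F‖ ^ p + θ ^ q →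
      ‖Sig F θ‖ ≤ ε * (‖F‖ ^ p + θ ^ q))
    -- (a3): |η(F,θ)|/(|F|^p + θ^q) → 0
    (ha3 : ∀ ε > (0:ℝ), ∃ R₀, ∀ F θ, 0 ≤ θ → R₀ ≤ ‖F‖ ^ p + θ ^ q →
      |η F θ| ≤ ε * (‖F‖ ^ p + θ ^ q))
    -- the compact set Γ_{M,δ}
    (M δ : ℝ) (hM : 0 < M) (hδ : 0 < δ) :
    ∃ C > (0:ℝ),
      ∀ (Fb : EuclideanSpace ℝ (Fin d × Fin d)) (vb : EuclideanSpace ℝ (Fin d)) (θb : ℝ),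
        ‖Fb‖ ≤ M → ‖vb‖ ≤ M → δ ≤ θb → θb ≤ M →
        ∀ (F : EuclideanSpace ℝ (Fin d × Fin d)) (v : EuclideanSpace ℝ (Fin d)) (θ : ℝ),
          0 ≤ θ →
          ‖Sig F θ - Sig Fb θb - fderiv ℝ (fun F' => Sig F' θb) Fb (F - Fb)
              - (θ - θb) • deriv (fun s => Sig Fb s) θb‖ ≤
            C * ((ψ F θ - ψ Fb θb - ⟪Sig Fb θb, F - Fb⟫ + η Fb θb * (θ - θb))
                + (η F θ - η Fb θb) * (θ - θb) + (1/2) * ‖v - vb‖ ^ 2) := by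
  have hstable : IsGibbsStable (fun z ↦ ψ z.1 z.2) (fun z ↦ Sig z.1 z.2) (fun z ↦ η z.1 z.2) :=
    .of_partial_derivatives (hψreg.of_le (by norm_num)) (hSigreg.differentiableOn two_ne_zero)
      (hηreg.differentiableOn two_ne_zero) hconstSig (fun F θ hθ ↦ hconstη F θ hθ.le) hGibbsF
      hGibbsθ
  have hgrowth :
      HasDominantEnergy (fun z ↦ ψ z.1 z.2) (fun z ↦ Sig z.1 z.2) (fun z ↦ η z.1 z.2) :=
    .of_growthWeight hp hq.le hc (fun z hz ↦ (ha1 z.1 z.2 hz.2).1)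
      (isLittleO_growthWeight hp.le hq.le ha2).isBigO (isLittleO_growthWeight hp.le hq.le ha3)
  obtain ⟨C, hC, hle⟩ := relative_stress_controlled_by_relative_total_energy_general
    (W := EuclideanSpace ℝ (Fin d)) hSigreg (hηreg.of_le one_le_two) hstable hgrowth
    ((isCompact_closedBall 0 M).prod isCompact_Icc)
    (prod_mono (subset_univ _) (Icc_subset_Ici_self.trans (Ici_subset_Ici.2 hδ.le)))
  refine ⟨C, hC, fun Fb vb θb hFb _ hδθ hθM F v θ hθ ↦ ?_⟩
  have hθb : 0 < θb := hδ.trans_le hδθ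
  have hdiff := hSigreg.differentiableOn two_ne_zero (Fb, θb) ⟨mem_univ Fb, hθb.le⟩
  have hmain := hle (Fb, θb) ⟨mem_closedBall_zero_iff.2 hFb, hδθ, hθM⟩ (F, θ)
    ⟨mem_univ F, hθ⟩ v vb
  rwa [relativeStress_eq_of_pos hdiff hθb] at hmain
end
end
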